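/- (Global strong integration error of LMC, Theorem 1 instantiated to Langevin dynamics) Let f : ℝ^d → ℝ be three times continuously differentiable with m·I ≼ ∇²f(x) ≼ L·I for all x (0 < m ≤ L), κ = L/m, ∇f(0) = 0, and ‖∇(Δf)(x)‖ ≤ G(1+‖x‖) for all x for some G > 0. Let (x_t) be a solution of the overdamped Langevin dynamics driven by a standard d-dimensional Brownian motion (B_t) with square-integrable initial value x₀, and let (x̄_k) be the LMC iterates with step size h driven by the same Brownian motion, i.e. x̄₀ = x₀ and x̄_k = x̄_{k−1} − h∇f(x̄_{k−1}) + √2 (B_{kh} − B_{(k−1)h}). Then for every h with 0 < h ≤ 1/(4κL) and every k ≥ 0: (E‖x_{kh} − x̄_k‖²)^{1/2} ≤ C_LMC · h, where C_LMC = (10(L² + G)/m^{3/2}) · √(2d + m(E‖x₀‖² + 1)). -/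

import Mathlib

open MeasureTheory ProbabilityTheory Real
open scoped ENNReal NNReal

noncomputable section

/-- `ℝ^d` with the Euclidean structure. -/
abbrev Euc (d : ℕ) := EuclideanSpace ℝ (Fin d)

/-- The standard Gaussian measure `N(0, I_d)` on `ℝ^d`. -/
noncomputable def stdGaussian (d : ℕ) : Measure (Euc d) :=
  (Measure.pi fun _ : Fin d => gaussianReal 0 1).map (EuclideanSpace.equiv (Fin d) ℝ).symm

/-- The centered Gaussian measure on `ℝ^d` with covariance `σ2 • I_d`. -/
noncomputable def isoGaussian (d : ℕ) (σ2 : ℝ) : Measure (Euc d) :=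
  (stdGaussian d).map fun x => Real.sqrt σ2 • x

/-- `B` is a standard `d`-dimensional Brownian motion with respect to the filtration `ℱ`
under the probability measure `P`. -/
structure IsStdBrownian {d : ℕ} {Ω : Type*} {mΩ : MeasurableSpace Ω} (P : Measure Ω)
    (ℱ : Filtration ℝ mΩ) (B : ℝ → Ω → Euc d) : Prop where
  init : ∀ ω, B 0 ω = 0
  cont : ∀ ω, Continuous fun t => B t ω
  adapted : StronglyAdapted ℱ B
  incr_law : ∀ s t : ℝ, 0 ≤ s → s ≤ t →
    P.map (fun ω => B t ω - B s ω) = isoGaussian d (t - s)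
  incr_indep : ∀ s t : ℝ, 0 ≤ s → s ≤ t →
    Indep (MeasurableSpace.comap (fun ω => B t ω - B s ω) inferInstance) (ℱ s) P

/-- `X` is a (pathwise) solution of the overdamped Langevin dynamics
`dX_t = -∇f(X_t) dt + √2 dB_t`: a continuous adapted process satisfying the integral
equation `X_t = X_0 - ∫₀ᵗ ∇f(X_s) ds + √2 B_t` for all `t ≥ 0`. -/
structure IsLangevinSolution {d : ℕ} {Ω : Type*} {mΩ : MeasurableSpace Ω}
    (ℱ : Filtration ℝ mΩ) (f : Euc d → ℝ) (B : ℝ → Ω → Euc d) (X : ℝ → Ω → Euc d) : Prop where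
  cont : ∀ ω, Continuous fun t => X t ω
  adapted : StronglyAdapted ℱ X
  eqn : ∀ ω, ∀ t : ℝ, 0 ≤ t →
    X t ω = X 0 ω - (∫ s in (0:ℝ)..t, gradient f (X s ω)) + Real.sqrt 2 • B t ω

/-- The Hessian bounds `m • I ≼ ∇²f(x) ≼ L • I` for all `x`, expressed through the second
iterated Fréchet derivative: `m ‖v‖² ≤ ⟨v, ∇²f(x) v⟩ ≤ L ‖v‖²`. -/
def HessianBounds {d : ℕ} (m L : ℝ) (f : Euc d → ℝ) : Prop :=
  ∀ x v : Euc d, m * ‖v‖ ^ 2 ≤ iteratedFDeriv ℝ 2 f x ![v, v] ∧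
    iteratedFDeriv ℝ 2 f x ![v, v] ≤ L * ‖v‖ ^ 2

end

/-- The Laplacian of `f : ℝ^d → ℝ`, i.e. the trace of its Hessian. -/
noncomputable def lapl {d : ℕ} (f : Euc d → ℝ) (x : Euc d) : ℝ :=
  ∑ i : Fin d,
    iteratedFDeriv ℝ 2 f x ![EuclideanSpace.single i (1:ℝ), EuclideanSpace.single i (1:ℝ)]


open MeasureTheory ProbabilityTheory Real
open scoped ENNReal NNReal


/-- Polarization: a symmetric bilinear form with quadratic form bounded by `c`. -/
lemma bilin_bound {E : Type*} [NormedAddCommGroup E] [InnerProductSpace ℝ E] (b : E → E → ℝ)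
    (hadd : ∀ u v w, b (u + v) w = b u w + b v w) (hsmul : ∀ (r : ℝ) u v, b (r • u) v = r * b u v)
    (hsymm : ∀ u v, b u v = b v u) {c : ℝ} (hb : ∀ v, |b v v| ≤ c * ‖v‖ ^ 2) (u v : E) :
    |b u v| ≤ c * ‖u‖ * ‖v‖ := by
  have hneg : ∀ u v, b (-u) v = - b u v := by
    intro u v
    have := hsmul (-1) u v
    simpa using this
  have key : ∀ u v : E, |b u v| ≤ c * (‖u‖ ^ 2 + ‖v‖ ^ 2) / 2 := by
    intro u v
    have h1 := abs_le.1 (hb (u + v))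
    have h2 := abs_le.1 (hb (u + -v))
    have e1 : b (u + v) (u + v) = b u u + 2 * b u v + b v v := by
      rw [hadd, hsymm u, hsymm v (u + v), hadd, hadd, hsymm v u]; ring
    have e2 : b (u + -v) (u + -v) = b u u - 2 * b u v + b v v := by
      rw [hadd, hsymm u, hneg, hadd, hsymm v (u + -v), hadd, hneg, hneg, hsymm v u]; ring
    have p := parallelogram_law_with_norm ℝ u v
    rw [e1] at h1
    rw [e2, ← sub_eq_add_neg] at h2
    have p' : c * ‖u + v‖ ^ 2 + c * ‖u - v‖ ^ 2 = 2 * (c * (‖u‖ ^ 2 + ‖v‖ ^ 2)) := by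
      rw [← mul_add, p]; ring
    obtain ⟨h1, h1'⟩ := h1
    obtain ⟨h2, h2'⟩ := h2
    rw [abs_le]
    constructor
    · linarith
    · linarith
  by_cases hu : u = 0
  · have : b u v = 0 := by
      have := hsmul 0 u v
      simpa [hu] using this
    rw [this]; simp [hu]
  by_cases hv : v = 0
  · have : b u v = 0 := by
      have := hsmul 0 v u
      rw [hsymm]
      simpa [hv] using this
    rw [this]; simp [hv]
  have hu' : 0 < ‖u‖ := norm_pos_iff.2 hu
  have hv' : 0 < ‖v‖ := norm_pos_iff.2 hv
  have k := key (‖u‖⁻¹ • u) (‖v‖⁻¹ • v)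
  rw [hsmul, hsymm, hsmul, hsymm, norm_smul, norm_smul, norm_inv, norm_inv, norm_norm, norm_norm,
    inv_mul_cancel₀ hu'.ne', inv_mul_cancel₀ hv'.ne', abs_mul, abs_mul, abs_of_pos (inv_pos.2 hu'),
    abs_of_pos (inv_pos.2 hv')] at k
  have : |b u v| = ‖u‖ * ‖v‖ * (‖u‖⁻¹ * (‖v‖⁻¹ * |b u v|)) := by
    field_simp
  rw [this]
  calc _ ≤ ‖u‖ * ‖v‖ * (c * (1 ^ 2 + 1 ^ 2) / 2) := by gcongr
    _ = _ := by ring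

section calculus
variable {d : ℕ} {f : Euc d → ℝ} {m L G : ℝ}

lemma inner_gradient (hf : ContDiff ℝ 3 f) (x v : Euc d) :
    inner ℝ (gradient f x) v = fderiv ℝ f x v := by
  simp [gradient, InnerProductSpace.toDual_symm_apply]

lemma contDiff_fderiv (hf : ContDiff ℝ 3 f) : ContDiff ℝ 2 (fderiv ℝ f) :=
  hf.fderiv_right (by norm_num)

lemma iter2 (x u v : Euc d) :
    iteratedFDeriv ℝ 2 f x ![u, v] = fderiv ℝ (fderiv ℝ f) x u v := by
  rw [iteratedFDeriv_two_apply]; simp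

lemma hess_symm (hf : ContDiff ℝ 3 f) (x u v : Euc d) :
    fderiv ℝ (fderiv ℝ f) x u v = fderiv ℝ (fderiv ℝ f) x v u := by
  have : IsSymmSndFDerivAt ℝ f x := hf.contDiffAt.isSymmSndFDerivAt (by simp; norm_num)
  exact this.eq u v

lemma grad_eq_toDual : gradient f = fun x => (InnerProductSpace.toDual ℝ (Euc d)).symm (fderiv ℝ f x) := rfl

lemma gradient_contDiff (hf : ContDiff ℝ 3 f) : ContDiff ℝ 2 (gradient f) := by
  rw [grad_eq_toDual]
  exact ((InnerProductSpace.toDual ℝ (Euc d)).symm.toContinuousLinearEquiv.contDiff).comp (contDiff_fderiv hf)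

lemma hasFDerivAt_grad_inner (hf : ContDiff ℝ 3 f) (x w : Euc d) :
    HasFDerivAt (fun y => fderiv ℝ f y w)
      ((ContinuousLinearMap.apply ℝ ℝ w).comp (fderiv ℝ (fderiv ℝ f) x)) x := by
  have h1 : HasFDerivAt (fderiv ℝ f) (fderiv ℝ (fderiv ℝ f) x) x :=
    (((contDiff_fderiv hf).differentiable (by norm_num)) x).hasFDerivAt
  exact (ContinuousLinearMap.apply ℝ ℝ w).hasFDerivAt.comp x h1

/-- General Lipschitz estimate for `x ↦ α x - β ∇f(x)`. -/
lemma affine_grad_lip (hf : ContDiff ℝ 3 f) {α β c : ℝ}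
    (hb : ∀ x v : Euc d, |α * ‖v‖ ^ 2 - β * iteratedFDeriv ℝ 2 f x ![v, v]| ≤ c * ‖v‖ ^ 2)
    (x y : Euc d) :
    ‖(α • x - β • gradient f x) - (α • y - β • gradient f y)‖ ≤ c * ‖x - y‖ := by
  set w := (α • x - β • gradient f x) - (α • y - β • gradient f y) with hw
  let φ : Euc d → ℝ := fun z => α * inner ℝ w z - β * fderiv ℝ f z w
  have hφ : ∀ z, HasFDerivAt φ (α • innerSL ℝ w -
      β • (ContinuousLinearMap.apply ℝ ℝ w).comp (fderiv ℝ (fderiv ℝ f) z)) z := by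
    intro z
    exact ((innerSL ℝ w).hasFDerivAt.const_mul α).sub ((hasFDerivAt_grad_inner hf z w).const_mul β)
  have hbd : ∀ z v, |α * inner ℝ v w - β * fderiv ℝ (fderiv ℝ f) z v w| ≤ c * ‖v‖ * ‖w‖ := by
    intro z v
    refine bilin_bound (fun v w : Euc d => α * inner ℝ v w - β * fderiv ℝ (fderiv ℝ f) z v w)
      ?_ ?_ ?_ ?_ v w
    · intro u v w; simp [inner_add_left]; ring
    · intro r u v; simp [inner_smul_left]; ring
    · intro u v; simp only [real_inner_comm u v, hess_symm hf z u v]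
    · intro v
      have := hb z v
      rw [iter2] at this
      rwa [real_inner_self_eq_norm_sq]
  by_cases hc : w = 0
  · rw [hc, norm_zero]
    by_cases hxy : x = y
    · simp [hxy]
    have hv : 0 < ‖x - y‖ := norm_pos_iff.2 (sub_ne_zero.2 hxy)
    have h2 := (abs_nonneg _).trans (hb x (x - y))
    have : 0 ≤ c := by
      by_contra hcn
      push Not at hcn
      have : c * ‖x - y‖ ^ 2 < 0 := mul_neg_of_neg_of_pos hcn (by positivity)
      linarith
    positivity
  have hwpos : 0 < ‖w‖ := norm_pos_iff.2 hc
  have hmv : ∃ C : ℝ, C = c * ‖w‖ := ⟨_, rfl⟩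
  have h1 : ‖φ x - φ y‖ ≤ (c * ‖w‖) * ‖x - y‖ := by
    -- mean value along the segment
    let ψ : ℝ → ℝ := fun t => φ (y + t • (x - y))
    have hψ : ∀ t, HasDerivAt ψ ((α • innerSL ℝ w -
      β • (ContinuousLinearMap.apply ℝ ℝ w).comp (fderiv ℝ (fderiv ℝ f) (y + t • (x - y)))) (x - y)) t := by
      intro t
      have hl : HasDerivAt (fun t : ℝ => y + t • (x - y)) (x - y) t := by
        simpa using ((hasDerivAt_id t).smul_const (x - y)).const_add y
      exact (hφ _).comp_hasDerivAt t hl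
    have := Convex.norm_image_sub_le_of_norm_hasDerivWithin_le (f := ψ) (C := c * ‖x - y‖ * ‖w‖)
      (s := Set.univ) (x := 0) (y := 1) (fun t _ => (hψ t).hasDerivWithinAt) (fun t _ => by
        have := hbd (y + t • (x - y)) (x - y)
        rw [real_inner_comm] at this
        simpa using this) convex_univ (Set.mem_univ _) (Set.mem_univ _)
    simp only [ψ, one_smul, zero_smul, add_zero, add_sub_cancel, sub_zero, norm_one, mul_one] at this
    linarith
  have h2 : φ x - φ y = ‖w‖ ^ 2 := by
    have : φ x - φ y = inner ℝ w ((α • x - β • gradient f x) - (α • y - β • gradient f y)) := by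
      simp only [φ, inner_sub_right, inner_smul_right]
      rw [real_inner_comm (gradient f x), real_inner_comm (gradient f y), inner_gradient hf, inner_gradient hf]
    rw [this, ← hw, real_inner_self_eq_norm_sq]
  rw [h2, Real.norm_of_nonneg (by positivity)] at h1
  nlinarith

lemma grad_lip (hm : 0 < m) (hf : ContDiff ℝ 3 f) (hH : HessianBounds m L f) (x y : Euc d) :
    ‖gradient f x - gradient f y‖ ≤ L * ‖x - y‖ := by
  have := affine_grad_lip hf (α := 0) (β := -1) (c := L) (fun x v => by
    have h := hH x v
    rw [abs_le]; constructor <;> nlinarith [sq_nonneg ‖v‖, mul_nonneg hm.le (sq_nonneg ‖v‖)]) x y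
  simpa using this

lemma psi_contract (hm : 0 < m) (hf : ContDiff ℝ 3 f) (hH : HessianBounds m L f) {h : ℝ} (h0 : 0 < h)
    (hL : 2 * h * L ≤ 1) (hmL : m ≤ L) (x y : Euc d) :
    ‖(x - h • gradient f x) - (y - h • gradient f y)‖ ≤ (1 - m * h) * ‖x - y‖ := by
  have := affine_grad_lip hf (α := 1) (β := h) (c := 1 - m * h) (fun x v => by
    obtain ⟨h1, h2⟩ := hH x v
    have h1' := mul_le_mul_of_nonneg_left h1 h0.le
    have h2' := mul_le_mul_of_nonneg_left h2 h0.le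
    have h3 := mul_le_mul_of_nonneg_right hL (sq_nonneg ‖v‖)
    have h4 : h * m * ‖v‖ ^ 2 ≤ h * L * ‖v‖ ^ 2 := by gcongr
    rw [abs_le]; constructor <;> nlinarith [sq_nonneg ‖v‖]) x y
  simpa using this

lemma grad_mono (hm : 0 < m) (hf : ContDiff ℝ 3 f) (hH : HessianBounds m L f) (hmL : m ≤ L) (x y : Euc d) :
    0 ≤ inner ℝ (gradient f x - gradient f y) (x - y) := by
  have hLp : 0 < L := hm.trans_le hmL
  set h := 1 / (2 * L) with hh
  have h0 : 0 < h := by positivity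
  have h1 := psi_contract hm hf hH h0 (by rw [hh]; field_simp; exact le_rfl) hmL x y
  have e : (x - h • gradient f x) - (y - h • gradient f y) = (x - y) - h • (gradient f x - gradient f y) := by
    rw [smul_sub]; abel
  rw [e] at h1
  have h2 : ‖x - y‖ ^ 2 - h * inner ℝ (gradient f x - gradient f y) (x - y) ≤ ‖x - y‖ * ‖x - y‖ := by
    have := real_inner_le_norm ((x - y) - h • (gradient f x - gradient f y)) (x - y)
    rw [inner_sub_left, inner_smul_left, real_inner_self_eq_norm_sq] at this
    simp only [conj_trivial] at this
    refine this.trans ?_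
    gcongr
    refine h1.trans ?_
    have : 0 ≤ m * h * ‖x - y‖ := by positivity
    linarith
  have : 0 ≤ h * inner ℝ (gradient f x - gradient f y) (x - y) := by nlinarith
  exact nonneg_of_mul_nonneg_right this h0

lemma lapl_eq (f : Euc d → ℝ) : lapl f = fun x => ∑ i : Fin d,
    fderiv ℝ (fderiv ℝ f) x (EuclideanSpace.single i (1:ℝ)) (EuclideanSpace.single i (1:ℝ)) := by
  funext x; simp only [lapl, iter2]

lemma lapl_contDiff (hf : ContDiff ℝ 3 f) : ContDiff ℝ 1 (lapl f) := by
  rw [lapl_eq]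
  have : ContDiff ℝ 1 (fderiv ℝ (fderiv ℝ f)) := (contDiff_fderiv hf).fderiv_right (by norm_num)
  refine ContDiff.sum fun i _ => ?_
  exact (this.clm_apply contDiff_const).clm_apply contDiff_const

lemma lapl_bound (hm : 0 < m) (hH : HessianBounds m L f) (x : Euc d) : |lapl f x| ≤ d * L := by
  unfold lapl
  refine (Finset.abs_sum_le_sum_abs _ _).trans ?_
  have : (d : ℝ) * L = ∑ i : Fin d, L := by simp
  rw [this]
  refine Finset.sum_le_sum fun i _ => ?_
  have := hH x (EuclideanSpace.single i 1)
  simp only [PiLp.norm_single, norm_one, one_pow, mul_one] at this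
  rw [abs_of_nonneg (by linarith)]
  exact this.2

lemma lapl_diff (hG : 0 < G) (hf : ContDiff ℝ 3 f)
    (hl : ∀ x : Euc d, ‖gradient (lapl f) x‖ ≤ G * (1 + ‖x‖)) (y w : Euc d) :
    |lapl f (y + w) - lapl f y| ≤ G * (1 + ‖y‖ + ‖w‖) * ‖w‖ := by
  have hd := (lapl_contDiff hf).differentiable (by norm_num)
  have hn : ∀ x, ‖fderiv ℝ (lapl f) x‖ ≤ G * (1 + ‖x‖) := by
    intro x
    have := hl x
    rwa [gradient, LinearIsometryEquiv.norm_map] at this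
  have := Convex.norm_image_sub_le_of_norm_fderiv_le (𝕜 := ℝ) (f := lapl f)
    (C := G * (1 + ‖y‖ + ‖w‖))
    (s := Metric.closedBall y ‖w‖) (x := y) (y := y + w) (fun x _ => hd x) (fun x hx => by
      refine (hn x).trans ?_
      have : ‖x‖ ≤ ‖y‖ + ‖w‖ := by
        have h1 : ‖x - y‖ ≤ ‖w‖ := by simpa [dist_eq_norm] using hx
        calc ‖x‖ = ‖y + (x - y)‖ := by simp
          _ ≤ ‖y‖ + ‖x - y‖ := norm_add_le _ _
          _ ≤ _ := by linarith
      exact mul_le_mul_of_nonneg_left (by linarith) hG.le) (convex_closedBall _ _) (by simp) (by simp [dist_eq_norm])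
  simpa using this
end calculus


lemma pdf_deriv (t : ℝ) : HasDerivAt (gaussianPDFReal 0 1) (-(t * gaussianPDFReal 0 1 t)) t := by
  rw [gaussianPDFReal_def]
  have h1 : HasDerivAt (fun x : ℝ => -(x - 0) ^ 2 / (2 * ((1 : ℝ≥0) : ℝ))) (-t) t := by
    have := ((hasDerivAt_id t).sub_const 0).pow 2 |>.neg.div_const (2 * ((1 : ℝ≥0) : ℝ))
    refine this.congr_deriv ?_
    simp only [id, NNReal.coe_one]; norm_num; ring
  refine (h1.exp.const_mul _).congr_deriv ?_
  simp; ring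

lemma integrable_gauss_iff (g : ℝ → ℝ) :
    Integrable g (gaussianReal 0 1) ↔ Integrable (fun t => gaussianPDFReal 0 1 t * g t) := by
  rw [gaussianReal_of_var_ne_zero 0 one_ne_zero,
    integrable_withDensity_iff_integrable_smul' (measurable_gaussianPDF 0 1)
      (ae_of_all _ fun _ => gaussianPDF_lt_top)]
  simp only [toReal_gaussianPDF, smul_eq_mul]

lemma stein1 {ψ ψ' : ℝ → ℝ} {K C : ℝ} (hψ : ∀ t, HasDerivAt ψ (ψ' t) t) (hc : Continuous ψ')
    (hK : ∀ t, |ψ t| ≤ K) (hC : ∀ t, |ψ' t| ≤ C) :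
    ∫ t, t * ψ t ∂(gaussianReal 0 1) = ∫ t, ψ' t ∂(gaussianReal 0 1) := by
  have hψc : Continuous ψ := continuous_iff_continuousAt.2 fun t => (hψ t).continuousAt
  have hid : Integrable (fun t : ℝ => t) (gaussianReal 0 1) := IsGaussian.integrable_id
  have i1 : Integrable (fun t => t * ψ t) (gaussianReal 0 1) :=
    hid.mul_bdd hψc.aestronglyMeasurable (ae_of_all _ hK)
  have i2 : Integrable ψ' (gaussianReal 0 1) :=
    Integrable.of_bound hc.aestronglyMeasurable C (ae_of_all _ hC)
  have i3 : Integrable ψ (gaussianReal 0 1) :=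
    Integrable.of_bound hψc.aestronglyMeasurable K (ae_of_all _ hK)
  rw [integrable_gauss_iff] at i1 i2 i3
  have key := integral_mul_deriv_eq_deriv_mul_of_integrable (u := ψ) (u' := ψ')
    (v := gaussianPDFReal 0 1) (v' := fun t => -(t * gaussianPDFReal 0 1 t))
    (fun t _ => hψ t) (fun t _ => pdf_deriv t)
    (i1.neg.congr (ae_of_all _ fun t => by simp; ring))
    (i2.congr (ae_of_all _ fun t => by simp; ring))
    (i3.congr (ae_of_all _ fun t => by simp; ring))
  rw [integral_gaussianReal_eq_integral_smul one_ne_zero,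
    integral_gaussianReal_eq_integral_smul one_ne_zero]
  have e1 : ∫ t, ψ t * -(t * gaussianPDFReal 0 1 t) = - ∫ t, gaussianPDFReal 0 1 t • (t * ψ t) := by
    rw [← integral_neg]; congr 1; ext t; simp; ring
  have e2 : ∫ t, ψ' t * gaussianPDFReal 0 1 t = ∫ t, gaussianPDFReal 0 1 t • ψ' t := by
    congr 1; ext t; simp; ring
  rw [e1, e2] at key
  linarith

section gauss
variable {d : ℕ}

lemma std_eq (d : ℕ) : _root_.stdGaussian d = ProbabilityTheory.stdGaussian (Euc d) := by
  rw [← map_pi_eq_stdGaussian]; rfl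

instance std_gauss (d : ℕ) : IsGaussian (_root_.stdGaussian d) := by
  rw [std_eq]; infer_instance

instance std_prob (d : ℕ) : IsProbabilityMeasure (_root_.stdGaussian d) := by
  rw [std_eq]; infer_instance

lemma std_integrable_norm : Integrable (fun z : Euc d => ‖z‖) (_root_.stdGaussian d) :=
  (IsGaussian.integrable_id (μ := _root_.stdGaussian d)).norm

lemma std_integrable_sq : Integrable (fun z : Euc d => ‖z‖ ^ 2) (_root_.stdGaussian d) :=
  (IsGaussian.memLp_two_id (μ := _root_.stdGaussian d)).integrable_norm_pow (by norm_num)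

lemma std_mean (v : Euc d) : ∫ z, inner ℝ v z ∂(_root_.stdGaussian d) = 0 := by
  rw [std_eq]
  exact integral_strongDual_stdGaussian (innerSL ℝ v)

lemma std_sq : ∫ z, ‖z‖ ^ 2 ∂(_root_.stdGaussian d) = d := by
  have h1 : ∀ z : Euc d, ‖z‖ ^ 2 = ∑ i, (inner ℝ (EuclideanSpace.single i (1:ℝ)) z) ^ 2 := by
    intro z
    rw [EuclideanSpace.norm_sq_eq]
    simp [EuclideanSpace.inner_single_left]
  have hm : MemLp id 2 (_root_.stdGaussian d) := IsGaussian.memLp_two_id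
  have hi : ∀ i : Fin d, MemLp (fun z : Euc d => inner ℝ (EuclideanSpace.single i (1:ℝ)) z) 2 (_root_.stdGaussian d) :=
    fun i => hm.const_inner _
  simp_rw [h1]
  rw [integral_finsetSum _ (fun i _ => (hi i).integrable_sq)]
  have : ∀ i : Fin d, ∫ z, (inner ℝ (EuclideanSpace.single i (1:ℝ)) z) ^ 2 ∂(_root_.stdGaussian d) = 1 := by
    intro i
    have hv := variance_dual_stdGaussian (E := Euc d) (innerSL ℝ (EuclideanSpace.single i (1:ℝ)))
    rw [← std_eq, variance_eq_sub (X := innerSL ℝ (EuclideanSpace.single i (1:ℝ))) (hi i)] at hv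
    have hz := std_mean (EuclideanSpace.single i (1:ℝ) : Euc d)
    simp only [Pi.pow_apply, innerSL_apply_apply, innerSL_apply_norm, PiLp.norm_single, norm_one, one_pow] at hv
    rw [hz] at hv
    simpa using hv
  simp [this]

lemma std_norm_le : ∫ z, ‖z‖ ∂(_root_.stdGaussian d) ≤ √d := by
  have h2 : MemLp (fun z : Euc d => ‖z‖) 2 (_root_.stdGaussian d) :=
    (IsGaussian.memLp_two_id (μ := _root_.stdGaussian d)).norm
  have := variance_nonneg (fun z : Euc d => ‖z‖) (_root_.stdGaussian d)
  rw [variance_eq_sub h2] at this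
  simp only [Pi.pow_apply] at this
  rw [std_sq] at this
  exact Real.le_sqrt_of_sq_le (by linarith)

/-- Stein identity in coordinate `i`. -/
lemma stein (i : Fin d) {u u' : Euc d → ℝ} {K C : ℝ} (hcu : Continuous u) (hc : Continuous u')
    (hu : ∀ z, HasLineDerivAt ℝ u (u' z) z (EuclideanSpace.single i (1:ℝ)))
    (hK : ∀ z, |u z| ≤ K) (hC : ∀ z, |u' z| ≤ C) :
    ∫ z, z i * u z ∂(_root_.stdGaussian d) = ∫ z, u' z ∂(_root_.stdGaussian d) := by
  obtain ⟨n, rfl⟩ : ∃ n, d = n + 1 := ⟨d - 1, by have := i.pos; omega⟩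
  have hmeas : Measurable (EuclideanSpace.equiv (Fin (n+1)) ℝ).symm :=
    (EuclideanSpace.equiv (Fin (n+1)) ℝ).symm.continuous.measurable
  have hi1 : Integrable (fun z : Euc (n+1) => z i * u z) (_root_.stdGaussian (n+1)) := by
    have : Integrable (fun z : Euc (n+1) => z i) (_root_.stdGaussian (n+1)) :=
      ((IsGaussian.integrable_id (μ := _root_.stdGaussian (n+1))).const_inner
        (EuclideanSpace.single i (1:ℝ))).congr
        (ae_of_all _ fun z => by simp [EuclideanSpace.inner_single_left])
    exact this.mul_bdd hcu.aestronglyMeasurable (ae_of_all _ hK)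
  have hi2 : Integrable u' (_root_.stdGaussian (n+1)) :=
    Integrable.of_bound hc.aestronglyMeasurable C (ae_of_all _ hC)
  have hpi : Continuous fun z : Euc (n+1) => z i := by fun_prop
  unfold _root_.stdGaussian at hi1 hi2 ⊢
  rw [integral_map hmeas.aemeasurable (by fun_prop),
    integral_map hmeas.aemeasurable (by fun_prop)]
  rw [integrable_map_measure (by fun_prop) hmeas.aemeasurable] at hi1 hi2
  have mp := (measurePreserving_piFinSuccAbove (fun _ : Fin (n+1) => gaussianReal 0 1) i).symm
  rw [← mp.integral_comp', ← mp.integral_comp']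
  rw [← mp.integrable_comp_emb (MeasurableEquiv.measurableEmbedding _)] at hi1 hi2
  refine (integral_prod_symm _ hi1).trans (Eq.trans ?_ (integral_prod_symm _ hi2).symm)
  congr 1
  ext y
  let p : ℝ → Euc (n+1) := fun t => (EuclideanSpace.equiv (Fin (n+1)) ℝ).symm
    ((MeasurableEquiv.piFinSuccAbove (fun _ => ℝ) i).symm (t, y))
  have hp : ∀ t, p t = p 0 + t • EuclideanSpace.single i (1:ℝ) := by
    intro t
    ext j
    rcases Fin.eq_self_or_eq_succAbove i j with rfl | ⟨j, rfl⟩ <;>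
    simp [p, MeasurableEquiv.piFinSuccAbove_symm_apply, Fin.insertNthEquiv]
  have hpt : ∀ t, p t i = t := by
    intro t
    simp [p, MeasurableEquiv.piFinSuccAbove_symm_apply, Fin.insertNthEquiv]
  have hpc : Continuous p := by
    have : p = fun t => p 0 + t • EuclideanSpace.single i (1:ℝ) := funext hp
    rw [this]; fun_prop
  change ∫ t, (p t) i * u (p t) ∂_ = ∫ t, u' (p t) ∂_
  simp only [hpt]
  refine stein1 (K := K) (C := C) (fun t => ?_) (hc.comp hpc) (fun t => hK _) (fun t => hC _)
  have h1 := hu (p t)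
  unfold HasLineDerivAt at h1
  have h2 : HasDerivAt (fun s : ℝ => s - t) 1 t := by simpa using (hasDerivAt_id t).sub_const t
  have h1' : HasDerivAt (fun s : ℝ => u (p t + s • EuclideanSpace.single i (1:ℝ))) (u' (p t)) (t - t) := by
    simpa using h1
  have h3 := HasDerivAt.scomp (h := fun s : ℝ => s - t) t h1' h2
  refine (h3.congr_of_eventuallyEq (Filter.Eventually.of_forall fun s => ?_)).congr_deriv (by simp)
  simp only [Function.comp]
  rw [hp s, hp t, add_assoc, ← add_smul]
  congr 3; ring

end gauss


section heat
variable {d : ℕ} {f : Euc d → ℝ} {m L G : ℝ}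

lemma heat_bound {F : Euc d → ℝ} (hF : ContDiff ℝ 2 F) {K C c₀ c₁ : ℝ}
    (hK : ∀ y, ‖fderiv ℝ F y‖ ≤ K)
    (hC : ∀ (i : Fin d) y, |fderiv ℝ (fderiv ℝ F) y (EuclideanSpace.single i (1:ℝ))
      (EuclideanSpace.single i (1:ℝ))| ≤ C)
    (hc₀ : 0 ≤ c₀)
    (hl : ∀ y, |∑ i : Fin d, fderiv ℝ (fderiv ℝ F) y (EuclideanSpace.single i (1:ℝ))
      (EuclideanSpace.single i (1:ℝ))| ≤ c₀ * (c₁ + ‖y‖)) (x : Euc d) {σ : ℝ} (hσ : 0 ≤ σ) :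
    |∫ z, F (x + σ • z) ∂(_root_.stdGaussian d) - F x| ≤
      c₀ * (c₁ + ‖x‖ + σ * √d) * (σ ^ 2 / 2) := by
  have hK0 : 0 ≤ K := (norm_nonneg _).trans (hK 0)
  have hFd : Differentiable ℝ F := hF.differentiable (by norm_num)
  have hF1 : ContDiff ℝ 1 (fderiv ℝ F) := hF.fderiv_right (by norm_num)
  have hF1d : Differentiable ℝ (fderiv ℝ F) := hF1.differentiable (by norm_num)
  have hF2c : Continuous (fderiv ℝ (fderiv ℝ F)) := hF1.continuous_fderiv (by norm_num)
  have hFlip : ∀ y w, |F (y + w) - F y| ≤ K * ‖w‖ := by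
    intro y w
    have := Convex.norm_image_sub_le_of_norm_fderiv_le (𝕜 := ℝ) (f := F) (C := K)
      (s := Set.univ) (x := y) (y := y + w) (fun x _ => hFd x) (fun x _ => hK x) convex_univ
      (Set.mem_univ _) (Set.mem_univ _)
    simpa using this
  have hintg : ∀ s : ℝ, Integrable (fun z => F (x + s • z)) (_root_.stdGaussian d) := by
    intro s
    have h1 : Integrable (fun z : Euc d => |F x| + K * (|s| * ‖z‖)) (_root_.stdGaussian d) :=
      (integrable_const _).add ((std_integrable_norm.const_mul _).const_mul _)
    refine h1.mono' (hF.continuous.comp (by fun_prop)).aestronglyMeasurable (ae_of_all _ fun z => ?_)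
    have h2 := hFlip x (s • z)
    rw [norm_smul, Real.norm_eq_abs] at h2
    have h3 : |F (x + s • z)| ≤ |F x| + |F (x + s • z) - F x| := by
      have := abs_add_le (F x) (F (x + s • z) - F x)
      simpa using this
    rw [Real.norm_eq_abs]; linarith
  -- derivative in s
  have hder : ∀ s : ℝ, HasDerivAt (fun s : ℝ => ∫ z, F (x + s • z) ∂(_root_.stdGaussian d))
      (∫ z, fderiv ℝ F (x + s • z) z ∂(_root_.stdGaussian d)) s := by
    intro s
    refine (hasDerivAt_integral_of_dominated_loc_of_deriv_le (bound := fun z => K * ‖z‖)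
      (F' := fun s z => fderiv ℝ F (x + s • z) z)
      (Filter.univ_mem) (Filter.Eventually.of_forall fun s => (hintg s).aestronglyMeasurable)
      (hintg s) ?_ (ae_of_all _ fun z s _ => ?_) (std_integrable_norm.const_mul _)
      (ae_of_all _ fun z s _ => ?_)).2
    · have : Continuous fun z : Euc d => fderiv ℝ F (x + s • z) z :=
        (hF1.continuous.comp (by fun_prop)).clm_apply continuous_id
      exact this.aestronglyMeasurable
    · exact (ContinuousLinearMap.le_opNorm _ _).trans (by gcongr; exact hK _)
    · have hl : HasDerivAt (fun s : ℝ => x + s • z) z s := by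
        simpa using ((hasDerivAt_id s).smul_const z).const_add x
      exact (hFd _).hasFDerivAt.comp_hasDerivAt s hl
  -- Stein
  have hst : ∀ s : ℝ, ∫ z, fderiv ℝ F (x + s • z) z ∂(_root_.stdGaussian d) =
      s * ∫ z, ∑ i : Fin d, fderiv ℝ (fderiv ℝ F) (x + s • z) (EuclideanSpace.single i (1:ℝ))
        (EuclideanSpace.single i (1:ℝ)) ∂(_root_.stdGaussian d) := by
    intro s
    let u : Fin d → Euc d → ℝ := fun i z => fderiv ℝ F (x + s • z) (EuclideanSpace.single i (1:ℝ))
    have huc : ∀ i, Continuous (u i) := fun i =>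
      (hF1.continuous.comp (by fun_prop)).clm_apply continuous_const
    have huK : ∀ i z, |u i z| ≤ K := by
      intro i z
      have h1 := ContinuousLinearMap.le_opNorm (fderiv ℝ F (x + s • z)) (EuclideanSpace.single i (1:ℝ))
      rw [PiLp.norm_single, norm_one, mul_one] at h1
      exact h1.trans (hK _)
    have hu'c : ∀ i, Continuous fun z => fderiv ℝ (fderiv ℝ F) (x + s • z)
        (EuclideanSpace.single i (1:ℝ)) (EuclideanSpace.single i (1:ℝ)) := fun i =>
      ((hF2c.comp (by fun_prop)).clm_apply continuous_const).clm_apply continuous_const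
    have e1 : ∀ z : Euc d, fderiv ℝ F (x + s • z) z = ∑ i, z i * u i z := by
      intro z
      have hz : z = ∑ i, z i • EuclideanSpace.single i (1:ℝ) := by
        ext j; simp [Finset.sum_apply, Pi.single_apply]
      conv_lhs => rw [hz]
      rw [map_sum]
      refine Finset.sum_congr rfl fun i _ => ?_
      rw [map_smul, smul_eq_mul, ← hz]
    simp_rw [e1]
    rw [integral_finsetSum, integral_finsetSum, Finset.mul_sum]
    · refine Finset.sum_congr rfl fun i _ => ?_
      rw [← integral_const_mul]
      refine stein i (K := K) (C := |s| * C) (huc i) (continuous_const.mul (hu'c i)) ?_ (huK i) ?_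
      · intro z
        unfold HasLineDerivAt
        have hl : HasDerivAt (fun t : ℝ => x + s • (z + t • EuclideanSpace.single i (1:ℝ)))
            (s • EuclideanSpace.single i (1:ℝ)) 0 := by
          simpa using ((((hasDerivAt_id (0:ℝ)).smul_const
            (EuclideanSpace.single i (1:ℝ) : Euc d)).const_add z).const_smul s).const_add x
        have h1 : HasFDerivAt (fun y => fderiv ℝ F y (EuclideanSpace.single i (1:ℝ)))
          ((ContinuousLinearMap.apply ℝ ℝ (EuclideanSpace.single i (1:ℝ))).comp
            (fderiv ℝ (fderiv ℝ F) (x + s • z))) (x + s • (z + (0:ℝ) • EuclideanSpace.single i (1:ℝ))) := by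
          rw [zero_smul, add_zero]
          exact (ContinuousLinearMap.apply ℝ ℝ _).hasFDerivAt.comp _ (hF1d _).hasFDerivAt
        refine (h1.comp_hasDerivAt (0:ℝ) hl).congr_deriv ?_
        simp
      · intro z
        rw [abs_mul]
        gcongr
        exact hC i _
    · intro i _
      exact Integrable.of_bound (hu'c i).aestronglyMeasurable C (ae_of_all _ fun z => hC i _)
    · intro i _
      have : Integrable (fun z : Euc d => z i) (_root_.stdGaussian d) :=
        ((IsGaussian.integrable_id (μ := _root_.stdGaussian d)).const_inner
          (EuclideanSpace.single i (1:ℝ))).congr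
          (ae_of_all _ fun z => by simp [EuclideanSpace.inner_single_left])
      exact this.mul_bdd (huc i).aestronglyMeasurable (ae_of_all _ (huK i))
  have hbd : ∀ s : ℝ, 0 ≤ s → s ≤ σ → ‖∫ z, fderiv ℝ F (x + s • z) z ∂(_root_.stdGaussian d)‖ ≤
      c₀ * (c₁ + ‖x‖ + σ * √d) * s := by
    intro s hs hsσ
    rw [hst, norm_mul, Real.norm_of_nonneg hs, mul_comm]
    gcongr
    refine (norm_integral_le_of_norm_le (g := fun z => c₀ * (c₁ + (‖x‖ + s * ‖z‖)))
      ?_ (ae_of_all _ fun z => ?_)).trans ?_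
    · exact (((integrable_const _).add (((integrable_const _).add
        (std_integrable_norm.const_mul _)))).const_mul _)
    · refine (hl _).trans ?_
      gcongr
      refine (norm_add_le _ _).trans ?_
      rw [norm_smul, Real.norm_of_nonneg hs]
    · rw [integral_const_mul, integral_add (g := fun z : Euc d => ‖x‖ + s * ‖z‖)
        (integrable_const _) ((integrable_const _).add
        (std_integrable_norm.const_mul _)), integral_add (integrable_const _)
        (std_integrable_norm.const_mul _), integral_const_mul]
      simp only [integral_const, probReal_univ, one_smul]
      have := std_norm_le (d := d)
      have h0 : 0 ≤ ∫ z, ‖z‖ ∂(_root_.stdGaussian d) := integral_nonneg fun _ => norm_nonneg _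
      refine mul_le_mul_of_nonneg_left ?_ hc₀
      have : s * ∫ z, ‖z‖ ∂(_root_.stdGaussian d) ≤ σ * √d := by gcongr
      linarith
  have main := image_norm_le_of_norm_deriv_right_le_deriv_boundary (a := 0) (b := σ)
    (f := fun s => ∫ z, F (x + s • z) ∂(_root_.stdGaussian d) - F x)
    (f' := fun s => ∫ z, fderiv ℝ F (x + s • z) z ∂(_root_.stdGaussian d))
    (B := fun s => c₀ * (c₁ + ‖x‖ + σ * √d) * (s ^ 2 / 2))
    (B' := fun s => c₀ * (c₁ + ‖x‖ + σ * √d) * s)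
    (fun s _ => ((hder s).sub_const _).continuousAt.continuousWithinAt)
    (fun s _ => ((hder s).sub_const _).hasDerivWithinAt)
    (by simp) (fun s => by
      have := ((hasDerivAt_id s).pow 2).div_const 2 |>.const_mul (c₀ * (c₁ + ‖x‖ + σ * √d))
      refine this.congr_deriv ?_
      simp only [id]; ring)
    (fun s hs => hbd s hs.1 hs.2.le)
  have := main (Set.right_mem_Icc.2 hσ)
  simpa using this

lemma norm_fderiv_le (hm : 0 < m) (hf : ContDiff ℝ 3 f) (hH : HessianBounds m L f)
    (hg0 : gradient f 0 = 0) (y : Euc d) : ‖fderiv ℝ f y‖ ≤ L * ‖y‖ := by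
  have := grad_lip hm hf hH y 0
  rw [hg0, sub_zero, sub_zero, gradient, LinearIsometryEquiv.norm_map] at this
  exact this

lemma norm_fderiv_sub_le (hm : 0 < m) (hf : ContDiff ℝ 3 f) (hH : HessianBounds m L f)
    (x y : Euc d) : ‖fderiv ℝ f x - fderiv ℝ f y‖ ≤ L * ‖x - y‖ := by
  have := grad_lip hm hf hH x y
  rw [gradient, gradient, ← map_sub, LinearIsometryEquiv.norm_map] at this
  exact this

lemma heat_grad (hm : 0 < m) (hmL : m ≤ L) (hf : ContDiff ℝ 3 f) (hH : HessianBounds m L f)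
    (hg0 : gradient f 0 = 0) (hG : 0 < G)
    (hl : ∀ x : Euc d, ‖gradient (lapl f) x‖ ≤ G * (1 + ‖x‖)) (x v : Euc d) {σ : ℝ} (hσ : 0 ≤ σ) :
    |∫ z, inner ℝ v (gradient f (x + σ • z) - gradient f x) ∂(_root_.stdGaussian d)| ≤
      ‖v‖ * (G * (2 + ‖x‖ + σ * √d) * (σ ^ 2 / 2)) := by
  have hL : 0 < L := hm.trans_le hmL
  have hfd : Differentiable ℝ f := hf.differentiable (by norm_num)
  have hf1 : ContDiff ℝ 2 (fderiv ℝ f) := contDiff_fderiv hf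
  have hf1d : Differentiable ℝ (fderiv ℝ f) := hf1.differentiable (by norm_num)
  have hgc : Continuous (gradient f) := (gradient_contDiff hf).continuous
  have hquad : ∀ y, |f y| ≤ |f 0| + L * ‖y‖ ^ 2 := by
    intro y
    have := Convex.norm_image_sub_le_of_norm_fderiv_le (𝕜 := ℝ) (f := f) (C := L * ‖y‖)
      (s := Metric.closedBall 0 ‖y‖) (x := 0) (y := y) (fun x _ => hfd x) (fun x hx => by
        refine (norm_fderiv_le hm hf hH hg0 x).trans ?_
        have : ‖x‖ ≤ ‖y‖ := by simpa using hx
        gcongr) (convex_closedBall _ _) (by simp) (by simp)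
    rw [sub_zero, Real.norm_eq_abs] at this
    have h2 := abs_add_le (f 0) (f y - f 0)
    rw [add_sub_cancel] at h2
    nlinarith
  have hintg : ∀ y : Euc d, Integrable (fun z => f (y + σ • z)) (_root_.stdGaussian d) := by
    intro y
    have h1 : Integrable (fun z : Euc d => |f 0| + L * (2 * ‖y‖ ^ 2 + 2 * σ ^ 2 * ‖z‖ ^ 2)) (_root_.stdGaussian d) :=
      (integrable_const _).add (((integrable_const _).add (std_integrable_sq.const_mul _)).const_mul _)
    refine h1.mono' (hf.continuous.comp (by fun_prop)).aestronglyMeasurable (ae_of_all _ fun z => ?_)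
    refine (hquad _).trans ?_
    gcongr
    have := norm_add_le y (σ • z)
    rw [norm_smul, Real.norm_of_nonneg hσ] at this
    calc ‖y + σ • z‖ ^ 2 ≤ (‖y‖ + σ * ‖z‖) ^ 2 := by gcongr
      _ ≤ _ := by nlinarith [sq_nonneg (‖y‖ - σ * ‖z‖)]
  let q : ℝ → ℝ := fun δ => ∫ z, f (x + δ • v + σ • z) ∂(_root_.stdGaussian d) - f (x + δ • v)
  have hq : HasDerivAt q (∫ z, fderiv ℝ f (x + (0:ℝ) • v + σ • z) v ∂(_root_.stdGaussian d)
      - fderiv ℝ f (x + (0:ℝ) • v) v) 0 := by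
    refine HasDerivAt.sub ?_ ?_
    · refine (hasDerivAt_integral_of_dominated_loc_of_deriv_le
        (F := fun (δ : ℝ) z => f (x + δ • v + σ • z))
        (bound := fun z => L * (‖x‖ + ‖v‖ + σ * ‖z‖) * ‖v‖)
        (F' := fun (δ : ℝ) z => fderiv ℝ f (x + δ • v + σ • z) v)
        (Metric.ball_mem_nhds (0:ℝ) one_pos)
        (Filter.Eventually.of_forall fun s => (hintg _).aestronglyMeasurable)
        (hintg _) ?_ (ae_of_all _ fun z s hs => ?_) ?_
        (ae_of_all _ fun z s _ => ?_)).2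
      · have : Continuous fun z : Euc d => fderiv ℝ f (x + (0:ℝ) • v + σ • z) v :=
          (hf1.continuous.comp (by fun_prop)).clm_apply continuous_const
        exact this.aestronglyMeasurable
      · refine (ContinuousLinearMap.le_opNorm _ _).trans ?_
        gcongr
        refine (norm_fderiv_le hm hf hH hg0 _).trans ?_
        gcongr
        refine (norm_add₃_le).trans ?_
        rw [norm_smul, norm_smul, Real.norm_of_nonneg hσ]
        have : ‖s‖ ≤ 1 := by simpa using (mem_ball_zero_iff.1 hs).le
        have : ‖s‖ * ‖v‖ ≤ 1 * ‖v‖ := by gcongr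
        linarith
      · exact (((integrable_const _).add (std_integrable_norm.const_mul _)).const_mul _).mul_const _
      · have hl : HasDerivAt (fun s : ℝ => x + s • v + σ • z) v s := by
          simpa using (((hasDerivAt_id s).smul_const v).const_add x).add_const (σ • z)
        exact (hfd _).hasFDerivAt.comp_hasDerivAt s hl
    · have hl : HasDerivAt (fun s : ℝ => x + s • v) v 0 := by
        simpa using (((hasDerivAt_id (0:ℝ)).smul_const v).const_add x)
      exact (hfd _).hasFDerivAt.comp_hasDerivAt (0:ℝ) hl
  have hlip : ∀ᶠ δ in nhds (0:ℝ), ‖q δ - q 0‖ ≤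
      ‖v‖ * (G * (2 + ‖x‖ + σ * √d) * (σ ^ 2 / 2)) * ‖δ - 0‖ := by
    have hev : ∀ᶠ δ in nhds (0:ℝ), ‖δ • v‖ ≤ 1 := by
      have : Filter.Tendsto (fun δ : ℝ => ‖δ • v‖) (nhds 0) (nhds 0) := by
        have : Continuous fun δ : ℝ => ‖δ • v‖ := by fun_prop
        simpa using this.tendsto 0
      exact this.eventually (Iic_mem_nhds one_pos)
    filter_upwards [hev] with δ hδ
    let F : Euc d → ℝ := fun y => f (y + δ • v) - f y
    have hFf : ∀ y, fderiv ℝ F y = fderiv ℝ f (y + δ • v) - fderiv ℝ f y := by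
      intro y
      have h1 : HasFDerivAt (fun y => f (y + δ • v)) (fderiv ℝ f (y + δ • v)) y :=
        (hasFDerivAt_comp_add_right _).2 (hfd _).hasFDerivAt
      exact (h1.sub (hfd y).hasFDerivAt).fderiv
    have hFf2 : ∀ y, fderiv ℝ (fderiv ℝ F) y =
        fderiv ℝ (fderiv ℝ f) (y + δ • v) - fderiv ℝ (fderiv ℝ f) y := by
      intro y
      rw [funext hFf]
      have h1 : HasFDerivAt (fun y => fderiv ℝ f (y + δ • v)) (fderiv ℝ (fderiv ℝ f) (y + δ • v)) y :=
        (hasFDerivAt_comp_add_right _).2 (hf1d _).hasFDerivAt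
      exact (h1.sub (hf1d y).hasFDerivAt).fderiv
    have hFc : ContDiff ℝ 2 F := by
      have hf2 : ContDiff ℝ 2 f := hf.of_le (by norm_num)
      exact (hf2.comp (contDiff_id.add contDiff_const)).sub hf2
    have hb := heat_bound hFc (K := L * ‖δ • v‖) (C := 2 * L) (c₀ := G * ‖δ • v‖) (c₁ := 2)
      (fun y => by
        rw [hFf]
        simpa using norm_fderiv_sub_le hm hf hH (y + δ • v) y)
      (fun i y => by
        rw [hFf2]
        have a1 := hH (y + δ • v) (EuclideanSpace.single i 1)
        have a2 := hH y (EuclideanSpace.single i 1)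
        simp only [iter2, PiLp.norm_single, norm_one, one_pow, mul_one] at a1 a2
        simp only [_root_.sub_apply]
        rw [abs_le]; constructor <;> linarith)
      (by positivity)
      (fun y => by
        have h1 := lapl_diff hG hf hl y (δ • v)
        have e : ∑ i : Fin d, fderiv ℝ (fderiv ℝ F) y (EuclideanSpace.single i (1:ℝ))
            (EuclideanSpace.single i (1:ℝ)) = lapl f (y + δ • v) - lapl f y := by
          simp only [lapl_eq, hFf2, _root_.sub_apply, Finset.sum_sub_distrib]
        rw [e]
        refine h1.trans ?_
        have : G * (1 + ‖y‖ + ‖δ • v‖) * ‖δ • v‖ ≤ G * (1 + ‖y‖ + 1) * ‖δ • v‖ := by gcongr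
        refine this.trans (le_of_eq (by ring))) x hσ
    have e : q δ - q 0 = ∫ z, F (x + σ • z) ∂(_root_.stdGaussian d) - F x := by
      have h1 := hintg (x + δ • v)
      have h2 := hintg x
      have e1 : (fun z => F (x + σ • z)) = fun z => f (x + δ • v + σ • z) - f (x + σ • z) := by
        ext z; simp only [F]; rw [add_right_comm]
      rw [e1, integral_sub h1 h2]
      simp only [q, F, zero_smul, add_zero]; ring
    rw [e, Real.norm_eq_abs]
    refine hb.trans (le_of_eq ?_)
    rw [norm_smul, sub_zero]; ring
  have hfin := hq.le_of_lip' (by positivity) hlip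
  have e : ∫ z, inner ℝ v (gradient f (x + σ • z) - gradient f x) ∂(_root_.stdGaussian d) =
      ∫ z, fderiv ℝ f (x + (0:ℝ) • v + σ • z) v ∂(_root_.stdGaussian d)
      - fderiv ℝ f (x + (0:ℝ) • v) v := by
    have hi : Integrable (fun z => fderiv ℝ f (x + (0:ℝ) • v + σ • z) v) (_root_.stdGaussian d) := by
      have h1 : Integrable (fun z : Euc d => L * (‖x‖ + σ * ‖z‖) * ‖v‖) (_root_.stdGaussian d) :=
        (((integrable_const _).add (std_integrable_norm.const_mul _)).const_mul _).mul_const _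
      refine h1.mono' ((hf1.continuous.comp (by fun_prop)).clm_apply
        continuous_const).aestronglyMeasurable (ae_of_all _ fun z => ?_)
      refine (ContinuousLinearMap.le_opNorm _ _).trans ?_
      gcongr
      refine (norm_fderiv_le hm hf hH hg0 _).trans ?_
      gcongr
      refine (norm_add_le _ _).trans ?_
      rw [norm_smul, Real.norm_of_nonneg hσ, zero_smul, add_zero]
    have : fderiv ℝ f (x + (0:ℝ) • v) v = ∫ z, fderiv ℝ f (x + (0:ℝ) • v) v ∂(_root_.stdGaussian d) := by
      simp
    rw [this, ← integral_sub hi (integrable_const _)]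
    congr 1; ext z
    rw [real_inner_comm, inner_sub_left, inner_gradient hf, inner_gradient hf]
    simp
  rw [e]; exact hfin

end heat


section path
variable {E : Type*} [NormedAddCommGroup E] [InnerProductSpace ℝ E] [CompleteSpace E]

/-- The exact path started at `y`, driftless comparison. -/
lemma drift_bound {g : E → E} {L : ℝ} (hmono : ∀ x y, 0 ≤ inner ℝ (g x - g y) (x - y))
    (hgrow : ∀ x, ‖g x‖ ≤ L * ‖x‖) {w w' y : ℝ → E} (hy : Continuous y)
    (hw : ∀ s, HasDerivAt w (w' s) s) (hw0 : w 0 = 0)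
    (hw' : ∀ s, 0 ≤ s → w' s = - g (y s + w s)) {s : ℝ} (hs : 0 ≤ s) :
    ‖w s‖ ≤ ∫ r in (0:ℝ)..s, L * ‖y r‖ := by
  refine le_of_forall_pos_le_add fun ε hε => ?_
  have hpos : ∀ r, 0 < ‖w r‖ ^ 2 + ε ^ 2 := fun r => by positivity
  have hN : ∀ r, HasDerivAt (fun r => √(‖w r‖ ^ 2 + ε ^ 2))
      ((2 * inner ℝ (w r) (w' r)) / (2 * √(‖w r‖ ^ 2 + ε ^ 2))) r := fun r =>
    ((hw r).norm_sq.add_const _).sqrt (hpos r).ne'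
  have hB : ∀ r, HasDerivAt (fun r => (∫ r in (0:ℝ)..r, L * ‖y r‖) + ε) (L * ‖y r‖) r := by
    intro r
    have hc : Continuous fun r => L * ‖y r‖ := by fun_prop
    exact (hc.integral_hasStrictDerivAt 0 r).hasDerivAt.add_const _
  have main := image_le_of_deriv_right_le_deriv_boundary (a := 0) (b := s)
    (f := fun r => √(‖w r‖ ^ 2 + ε ^ 2))
    (f' := fun r => (2 * inner ℝ (w r) (w' r)) / (2 * √(‖w r‖ ^ 2 + ε ^ 2)))
    (B := fun r => (∫ r in (0:ℝ)..r, L * ‖y r‖) + ε) (B' := fun r => L * ‖y r‖)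
    (fun r _ => (hN r).continuousAt.continuousWithinAt)
    (fun r _ => (hN r).hasDerivWithinAt)
    (by simp [hw0, Real.sqrt_sq hε.le])
    (fun r _ => (hB r).continuousAt.continuousWithinAt) (fun r _ => (hB r).hasDerivWithinAt)
    (fun r hr => by
      have hNp : 0 < √(‖w r‖ ^ 2 + ε ^ 2) := Real.sqrt_pos.2 (hpos r)
      have hwN : ‖w r‖ ≤ √(‖w r‖ ^ 2 + ε ^ 2) := Real.le_sqrt_of_sq_le (by nlinarith)
      rw [div_le_iff₀ (by positivity), hw' r hr.1]
      have h1 := hmono (y r + w r) (y r)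
      rw [add_sub_cancel_left, inner_sub_left] at h1
      have h2 : - inner ℝ (g (y r)) (w r) ≤ L * ‖y r‖ * ‖w r‖ := by
        have := (abs_le.1 (abs_real_inner_le_norm (g (y r)) (w r))).1
        have h3 : ‖g (y r)‖ * ‖w r‖ ≤ L * ‖y r‖ * ‖w r‖ := by gcongr; exact hgrow _
        linarith
      have h4 : 0 ≤ L * ‖y r‖ := (norm_nonneg _).trans (hgrow _)
      have h5 : L * ‖y r‖ * ‖w r‖ ≤ L * ‖y r‖ * √(‖w r‖ ^ 2 + ε ^ 2) := by gcongr
      rw [inner_neg_right, real_inner_comm]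
      linarith)
  have h1 := main (Set.right_mem_Icc.2 hs)
  have h2 : ‖w s‖ ≤ √(‖w s‖ ^ 2 + ε ^ 2) := Real.le_sqrt_of_sq_le (by nlinarith)
  exact h2.trans h1

/-- Deterministic local error estimates. -/
lemma path_local {g : E → E} {L : ℝ} (hL : 0 ≤ L) (hmono : ∀ x y, 0 ≤ inner ℝ (g x - g y) (x - y))
    (hlip : ∀ x y, ‖g x - g y‖ ≤ L * ‖x - y‖) (hg0 : g 0 = 0) {X B : ℝ → E}
    (hX : Continuous X) (hB : Continuous B)
    (heq : ∀ t : ℝ, 0 ≤ t → X t = X 0 - (∫ s in (0:ℝ)..t, g (X s)) + √2 • B t)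
    {t h : ℝ} (ht : 0 ≤ t) (hh : 0 ≤ h) :
    (∀ s, 0 ≤ s → s ≤ h → ‖X (t + s) - (X t + √2 • (B (t + s) - B t))‖ ≤
      L * ∫ r in (0:ℝ)..h, ‖X t + √2 • (B (t + r) - B t)‖) ∧
    X (t + h) = X t - h • g (X t) + √2 • (B (t + h) - B t)
      - (∫ r in (0:ℝ)..h, (g (X (t + r)) - g (X t + √2 • (B (t + r) - B t))))
      - (∫ r in (0:ℝ)..h, (g (X t + √2 • (B (t + r) - B t)) - g (X t))) ∧
    ‖∫ r in (0:ℝ)..h, (g (X (t + r)) - g (X t + √2 • (B (t + r) - B t)))‖ ≤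
      L ^ 2 * h * ∫ r in (0:ℝ)..h, ‖X t + √2 • (B (t + r) - B t)‖ ∧
    ‖∫ r in (0:ℝ)..h, (g (X t + √2 • (B (t + r) - B t)) - g (X t))‖ ≤
      L * √2 * ∫ r in (0:ℝ)..h, ‖B (t + r) - B t‖ := by
  have hgrow : ∀ x, ‖g x‖ ≤ L * ‖x‖ := by
    intro x; simpa [hg0] using hlip x 0
  have hg : Continuous g := by
    have : LipschitzWith (⟨L, hL⟩ : ℝ≥0) g := LipschitzWith.of_dist_le_mul fun x y => by
      rw [dist_eq_norm, dist_eq_norm]; exact hlip x y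
    exact this.continuous
  set y : ℝ → E := fun s => X t + √2 • (B (t + s) - B t) with hy
  have hyc : Continuous y := by fun_prop
  have hgX : Continuous fun s => g (X (t + s)) := by fun_prop
  let w : ℝ → E := fun s => - ∫ r in (0:ℝ)..s, g (X (t + r))
  have hXw : ∀ s, 0 ≤ s → X (t + s) = y s + w s := by
    intro s hs
    rw [heq (t + s) (by linarith)]
    simp only [hy, w]
    conv_rhs => rw [heq t ht]
    have h1 : ∫ r in (0:ℝ)..(t + s), g (X r) = (∫ r in (0:ℝ)..t, g (X r)) + ∫ r in (0:ℝ)..s, g (X (t + r)) := by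
      rw [intervalIntegral.integral_comp_add_left (fun r => g (X r)), add_zero,
        intervalIntegral.integral_add_adjacent_intervals] <;>
      exact (hg.comp hX).intervalIntegrable _ _
    rw [h1, smul_sub]
    abel
  have hw : ∀ s, 0 ≤ s → ‖w s‖ ≤ ∫ r in (0:ℝ)..s, L * ‖y r‖ := by
    intro s hs
    refine drift_bound hmono hgrow hyc (w := w) (w' := fun s => - g (X (t + s))) (fun s => ?_) (by simp [w]) ?_ hs
    · exact (hgX.integral_hasStrictDerivAt 0 s).hasDerivAt.neg
    · intro s hs; rw [hXw s hs]
  have hw2 : ∀ s, 0 ≤ s → s ≤ h → ‖X (t + s) - y s‖ ≤ L * ∫ r in (0:ℝ)..h, ‖y r‖ := by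
    intro s hs hsh
    rw [hXw s hs, add_sub_cancel_left]
    refine (hw s hs).trans ?_
    rw [← intervalIntegral.integral_const_mul]
    refine intervalIntegral.integral_mono_interval le_rfl hs hsh (ae_of_all _ fun r => by positivity) ?_
    exact (by fun_prop : Continuous fun r => L * ‖y r‖).intervalIntegrable _ _
  have hc1 : Continuous fun r => g (X (t + r)) - g (y r) := by fun_prop
  have hc2 : Continuous fun r => g (y r) - g (X t) := by fun_prop
  refine ⟨hw2, ?_, ?_, ?_⟩
  · rw [sub_sub, ← intervalIntegral.integral_add (hc1.intervalIntegrable _ _) (hc2.intervalIntegrable _ _)]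
    simp only [sub_add_sub_cancel]
    rw [intervalIntegral.integral_sub (hgX.intervalIntegrable _ _) (by simp),
      hXw h hh]
    simp only [y, w, intervalIntegral.integral_const, sub_zero]
    abel
  · have := intervalIntegral.norm_integral_le_of_norm_le_const (a := 0) (b := h)
      (f := fun r => g (X (t + r)) - g (y r)) (C := L * (L * ∫ r in (0:ℝ)..h, ‖y r‖)) (fun r hr => by
        rw [Set.uIoc_of_le hh] at hr
        refine (hlip _ _).trans ?_
        gcongr
        exact hw2 r hr.1.le hr.2)
    rw [sub_zero, abs_of_nonneg hh] at this
    refine this.trans (le_of_eq (by ring))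
  · refine (intervalIntegral.norm_integral_le_integral_norm hh).trans ?_
    rw [← intervalIntegral.integral_const_mul]
    refine intervalIntegral.integral_mono_on hh (hc2.norm.intervalIntegrable _ _)
      ((by fun_prop : Continuous fun r => L * √2 * ‖B (t + r) - B t‖).intervalIntegrable _ _) fun r _ => ?_
    refine (hlip _ _).trans ?_
    rw [add_sub_cancel_left, norm_smul, Real.norm_of_nonneg (Real.sqrt_nonneg _), mul_assoc]
end path


section prob
variable {d : ℕ} {Ω : Type*} {mΩ : MeasurableSpace Ω} {P : Measure Ω} [IsProbabilityMeasure P]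
    {ℱ : Filtration ℝ mΩ} {B X : ℝ → Ω → Euc d}

lemma IsStdBrownian.meas (hB : IsStdBrownian P ℱ B) (t : ℝ) : Measurable (B t) :=
  ((hB.adapted t).mono (ℱ.le t)).measurable

/-- Freezing lemma: integrate out the increment first. -/
lemma freeze (hB : IsStdBrownian P ℱ B) {α : Type*} [MeasurableSpace α] {p : Ω → α} {t s : ℝ}
    (hp : Measurable[ℱ t] p) (ht : 0 ≤ t) (hs : 0 ≤ s) {Φ : α × Euc d → ℝ} (hΦ : Measurable Φ)
    (hintg : Integrable (fun ω => Φ (p ω, B (t + s) ω - B t ω)) P) :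
    ∫ ω, Φ (p ω, B (t + s) ω - B t ω) ∂P =
      ∫ ω, ∫ z, Φ (p ω, √s • z) ∂(_root_.stdGaussian d) ∂P := by
  have hp' : Measurable p := hp.mono (ℱ.le t) le_rfl
  have hb : Measurable fun ω => B (t + s) ω - B t ω := (hB.meas _).sub (hB.meas _)
  have hlaw := hB.incr_law t (t + s) ht (by linarith)
  rw [add_sub_cancel_left] at hlaw
  have hind : IndepFun p (fun ω => B (t + s) ω - B t ω) P := by
    have h1 := (hB.incr_indep t (t + s) ht (by linarith)).symm
    rw [IndepFun_iff_Indep]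
    exact indep_of_indep_of_le_left h1 hp.comap_le
  have hmap := (indepFun_iff_map_prod_eq_prod_map_map hp'.aemeasurable hb.aemeasurable).1 hind
  have hpb : Measurable fun ω => (p ω, B (t + s) ω - B t ω) := hp'.prodMk hb
  haveI := Measure.isProbabilityMeasure_map (μ := P) hp'.aemeasurable
  haveI := Measure.isProbabilityMeasure_map (μ := P) hb.aemeasurable
  have h1 : ∫ ω, Φ (p ω, B (t + s) ω - B t ω) ∂P =
      ∫ q, Φ q ∂(P.map fun ω => (p ω, B (t + s) ω - B t ω)) :=
    (integral_map hpb.aemeasurable hΦ.aestronglyMeasurable).symm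
  have hi : Integrable Φ (P.map fun ω => (p ω, B (t + s) ω - B t ω)) :=
    (integrable_map_measure hΦ.aestronglyMeasurable hpb.aemeasurable).2 hintg
  rw [h1]
  rw [hmap] at hi ⊢
  rw [integral_prod _ hi]
  have h2 : StronglyMeasurable fun a => ∫ b, Φ (a, b) ∂(P.map fun ω => B (t + s) ω - B t ω) :=
    hΦ.stronglyMeasurable.integral_prod_right'
  rw [integral_map hp'.aemeasurable h2.aestronglyMeasurable]
  refine integral_congr_ae (ae_of_all _ fun ω => ?_)
  simp only
  rw [hlaw, isoGaussian, integral_map (by fun_prop)]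
  exact (hΦ.comp measurable_prodMk_left).aestronglyMeasurable

lemma incr_memLp (hB : IsStdBrownian P ℱ B) {t s : ℝ} (ht : 0 ≤ t) (hs : 0 ≤ s) :
    MemLp (fun ω => B (t + s) ω - B t ω) 2 P ∧ ∫ ω, ‖B (t + s) ω - B t ω‖ ^ 2 ∂P = d * s := by
  have hb : Measurable fun ω => B (t + s) ω - B t ω := (hB.meas _).sub (hB.meas _)
  have hlaw := hB.incr_law t (t + s) ht (by linarith)
  rw [add_sub_cancel_left] at hlaw
  have hm : AEStronglyMeasurable (fun z : Euc d => ‖z‖ ^ 2) (P.map fun ω => B (t + s) ω - B t ω) := by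
    fun_prop
  have hm2 : AEStronglyMeasurable (fun z : Euc d => ‖z‖ ^ 2)
      ((_root_.stdGaussian d).map fun x => √s • x) := by fun_prop
  have hsq : ∀ z : Euc d, ‖√s • z‖ ^ 2 = s * ‖z‖ ^ 2 := fun z => by
    rw [norm_smul, mul_pow, Real.norm_of_nonneg (Real.sqrt_nonneg _), Real.sq_sqrt hs]
  constructor
  · rw [memLp_two_iff_integrable_sq_norm hb.aestronglyMeasurable]
    have := (integrable_map_measure hm hb.aemeasurable).1
    refine this ?_
    rw [hlaw, isoGaussian, integrable_map_measure hm2 (by fun_prop)]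
    simp only [Function.comp_def, hsq]
    exact std_integrable_sq.const_mul _
  · have := integral_map hb.aemeasurable hm
    rw [← this, hlaw, isoGaussian, integral_map (by fun_prop) hm2]
    simp only [hsq]
    rw [integral_const_mul, std_sq]; ring

lemma inner_integrable {U V : Ω → Euc d} (hU : MemLp U 2 P) (hV : MemLp V 2 P) :
    Integrable (fun ω => inner ℝ (U ω) (V ω)) P := by
  have h1 := (memLp_two_iff_integrable_sq_norm hU.1).1 hU
  have h2 := (memLp_two_iff_integrable_sq_norm hV.1).1 hV
  refine (h1.add h2).mono' (hU.1.inner hV.1) (ae_of_all _ fun ω => ?_)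
  have := norm_inner_le_norm (𝕜 := ℝ) (U ω) (V ω)
  simp only [Pi.add_apply]
  nlinarith [sq_nonneg (‖U ω‖ - ‖V ω‖), norm_nonneg (U ω), norm_nonneg (V ω)]

lemma incr_orth (hB : IsStdBrownian P ℱ B) {t s : ℝ} (ht : 0 ≤ t) (hs : 0 ≤ s) {A : Ω → Euc d}
    (hA : StronglyMeasurable[ℱ t] A) (hA2 : MemLp A 2 P) :
    ∫ ω, inner ℝ (A ω) (B (t + s) ω - B t ω) ∂P = 0 := by
  have h := freeze hB (p := A) hA.measurable ht hs (Φ := fun q => inner ℝ q.1 q.2) (by fun_prop)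
    (inner_integrable hA2 (incr_memLp hB ht hs).1)
  rw [h]
  simp only [inner_smul_right, integral_const_mul, std_mean, mul_zero, integral_zero]

/-- joint integrability -/
lemma joint_int {F : ℝ → Ω → ℝ} (hF : Measurable (Function.uncurry F)) {h c : ℝ}
    (hi : ∀ s, 0 ≤ s → s ≤ h → Integrable (fun ω => F s ω ^ 2) P)
    (hb : ∀ s, 0 ≤ s → s ≤ h → ∫ ω, F s ω ^ 2 ∂P ≤ c) :
    Integrable (fun q : ℝ × Ω => F q.1 q.2 ^ 2) ((volume.restrict (Set.Ioc 0 h)).prod P) := by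
  have hm : Measurable fun q : ℝ × Ω => F q.1 q.2 ^ 2 := by
    have : Measurable fun q : ℝ × Ω => F q.1 q.2 := hF
    fun_prop
  rw [integrable_prod_iff hm.aestronglyMeasurable]
  constructor
  · refine (ae_restrict_iff' measurableSet_Ioc).2 (ae_of_all _ fun s hs => hi s hs.1.le hs.2)
  · refine Integrable.mono' (g := fun _ => c) (integrable_const _) ?_ ?_
    · exact (hm.norm.stronglyMeasurable.integral_prod_right (ν := P)).aestronglyMeasurable
    · refine (ae_restrict_iff' measurableSet_Ioc).2 (ae_of_all _ fun s hs => ?_)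
      rw [Real.norm_of_nonneg (by positivity)]
      simpa using hb s hs.1.le hs.2

lemma cs_interval {F : ℝ → ℝ} (hF : Continuous F) {h : ℝ} (hh : 0 < h) :
    (∫ s in (0:ℝ)..h, F s) ^ 2 ≤ h * ∫ s in (0:ℝ)..h, F s ^ 2 := by
  set I := ∫ s in (0:ℝ)..h, F s with hI
  have h0 : 0 ≤ ∫ s in (0:ℝ)..h, (h * F s - I) ^ 2 :=
    intervalIntegral.integral_nonneg hh.le fun s _ => sq_nonneg _
  have h1 : ∫ s in (0:ℝ)..h, (h * F s - I) ^ 2 =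
      h ^ 2 * (∫ s in (0:ℝ)..h, F s ^ 2) - 2 * h * I * I + h * I ^ 2 := by
    have : ∀ s, (h * F s - I) ^ 2 = h ^ 2 * F s ^ 2 - 2 * h * I * F s + I ^ 2 := fun s => by ring
    simp only [this]
    rw [intervalIntegral.integral_add, intervalIntegral.integral_sub,
      intervalIntegral.integral_const_mul, intervalIntegral.integral_const_mul,
      intervalIntegral.integral_const, ← hI]
    · simp
    all_goals exact Continuous.intervalIntegrable (by fun_prop) _ _
  rw [h1] at h0
  have : 0 ≤ h * (h * (∫ s in (0:ℝ)..h, F s ^ 2) - I ^ 2) := by nlinarith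
  have := nonneg_of_mul_nonneg_right this hh
  linarith

lemma jensen {F : ℝ → Ω → ℝ} (hF : Measurable (Function.uncurry F)) (hc : ∀ ω, Continuous fun s => F s ω)
    {h c : ℝ} (hh : 0 < h)
    (hi : ∀ s, 0 ≤ s → s ≤ h → Integrable (fun ω => F s ω ^ 2) P)
    (hb : ∀ s, 0 ≤ s → s ≤ h → ∫ ω, F s ω ^ 2 ∂P ≤ c) :
    Measurable (fun ω => ∫ s in (0:ℝ)..h, F s ω) ∧
    Integrable (fun ω => (∫ s in (0:ℝ)..h, F s ω) ^ 2) P ∧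
      ∫ ω, (∫ s in (0:ℝ)..h, F s ω) ^ 2 ∂P ≤ h ^ 2 * c := by
  have hj := joint_int hF hi hb
  have hm : Measurable (fun ω => ∫ s in (0:ℝ)..h, F s ω) := by
    simp only [intervalIntegral.integral_of_le hh.le]
    exact (hF.stronglyMeasurable.integral_prod_left (μ := volume.restrict (Set.Ioc 0 h))).measurable
  have hintg : Integrable (fun ω => h * ∫ s in (0:ℝ)..h, F s ω ^ 2) P := by
    simp only [intervalIntegral.integral_of_le hh.le]
    exact hj.integral_prod_right.const_mul _
  have hi2 : Integrable (fun ω => (∫ s in (0:ℝ)..h, F s ω) ^ 2) P := by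
    refine hintg.mono' (hm.pow_const 2).aestronglyMeasurable (ae_of_all _ fun ω => ?_)
    rw [Real.norm_of_nonneg (sq_nonneg _)]
    exact cs_interval (hc ω) hh
  refine ⟨hm, hi2, ?_⟩
  refine (integral_mono hi2 hintg fun ω => cs_interval (hc ω) hh).trans ?_
  simp only [intervalIntegral.integral_of_le hh.le]
  rw [integral_const_mul, ← integral_integral_swap (f := fun s ω => F s ω ^ 2) hj]
  have : ∫ s in Set.Ioc 0 h, ∫ ω, F s ω ^ 2 ∂P ≤ ∫ s in Set.Ioc 0 h, c := by
    refine setIntegral_mono_on hj.integral_prod_left (integrable_const _) measurableSet_Ioc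
      fun s hs => hb s hs.1.le hs.2
  rw [integral_const] at this
  simp [hh.le] at this
  nlinarith
end prob


section onestep
variable {d : ℕ} {Ω : Type*} {mΩ : MeasurableSpace Ω} {P : Measure Ω} [IsProbabilityMeasure P]
    {ℱ : Filtration ℝ mΩ} {B X : ℝ → Ω → Euc d}

lemma joint_meas {Y : ℝ → Ω → Euc d} (hc : ∀ ω, Continuous fun s => Y s ω) (hm : ∀ s, Measurable (Y s)) :
    Measurable (Function.uncurry Y) :=
  measurable_uncurry_of_continuous_of_measurable hc hm

lemma sq_int {U : Ω → Euc d} (hU : MemLp U 2 P) : Integrable (fun ω => ‖U ω‖ ^ 2) P :=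
  (memLp_two_iff_integrable_sq_norm hU.1).1 hU

/-- orthogonal sum -/
lemma add_incr_sq (hB : IsStdBrownian P ℱ B) {t s : ℝ} (ht : 0 ≤ t) (hs : 0 ≤ s) {A : Ω → Euc d}
    (hA : StronglyMeasurable[ℱ t] A) (hA2 : MemLp A 2 P) :
    MemLp (fun ω => A ω + √2 • (B (t + s) ω - B t ω)) 2 P ∧
    ∫ ω, ‖A ω + √2 • (B (t + s) ω - B t ω)‖ ^ 2 ∂P = ∫ ω, ‖A ω‖ ^ 2 ∂P + 2 * d * s := by
  obtain ⟨hb, hb2⟩ := incr_memLp hB ht hs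
  have hbs : MemLp (fun ω => √2 • (B (t + s) ω - B t ω)) 2 P := hb.const_smul √2
  refine ⟨hA2.add hbs, ?_⟩
  have h1 : ∀ ω, ‖A ω + √2 • (B (t + s) ω - B t ω)‖ ^ 2 =
      ‖A ω‖ ^ 2 + 2 * √2 * inner ℝ (A ω) (B (t + s) ω - B t ω) + 2 * ‖B (t + s) ω - B t ω‖ ^ 2 := by
    intro ω
    rw [norm_add_sq_real, inner_smul_right, norm_smul, mul_pow, Real.norm_of_nonneg (Real.sqrt_nonneg _),
      Real.sq_sqrt (by norm_num)]
    ring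
  simp only [h1]
  have hi := inner_integrable hA2 hb
  have h3 : Integrable (fun ω => 2 * √2 * inner ℝ (A ω) (B (t + s) ω - B t ω)) P := hi.const_mul _
  have h4 : Integrable (fun ω => 2 * ‖B (t + s) ω - B t ω‖ ^ 2) P := (sq_int hb).const_mul _
  have h5 := integral_add ((sq_int hA2).add h3) h4
  have h6 := integral_add (sq_int hA2) h3
  simp only [Pi.add_apply] at h5
  rw [h5, h6, integral_const_mul, integral_const_mul, incr_orth hB ht hs hA hA2, hb2]
  ring

variable {f : Euc d → ℝ} {m L G : ℝ}

/-- conditional bias of the frozen drift -/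
lemma weak_pt (hm : 0 < m) (hmL : m ≤ L) (hf : ContDiff ℝ 3 f) (hHess : HessianBounds m L f)
    (hgrad0 : gradient f 0 = 0) (hG : 0 < G)
    (hlapl : ∀ x : Euc d, ‖gradient (lapl f) x‖ ≤ G * (1 + ‖x‖))
    (hB : IsStdBrownian P ℱ B) {t s h : ℝ} (ht : 0 ≤ t) (hs : 0 ≤ s) (hsh : s ≤ h) {A x : Ω → Euc d}
    (hA : StronglyMeasurable[ℱ t] A) (hA2 : MemLp A 2 P)
    (hx : StronglyMeasurable[ℱ t] x) (hx2 : MemLp x 2 P) {c : ℝ} (hc : 0 < c) :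
    Integrable (fun ω => inner ℝ (A ω) (gradient f (x ω + √2 • (B (t + s) ω - B t ω)) - gradient f (x ω))) P ∧
    - ∫ ω, inner ℝ (A ω) (gradient f (x ω + √2 • (B (t + s) ω - B t ω)) - gradient f (x ω)) ∂P ≤
      c * ∫ ω, ‖A ω‖ ^ 2 ∂P + h ^ 2 * G ^ 2 / (4 * c) * (3 * (4 + ∫ ω, ‖x ω‖ ^ 2 ∂P + 2 * d * h)) := by
  obtain ⟨hb, hb2⟩ := incr_memLp hB ht hs
  have hgc : Continuous (gradient f) := (gradient_contDiff hf).continuous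
  have hdm : MemLp (fun ω => gradient f (x ω + √2 • (B (t + s) ω - B t ω)) - gradient f (x ω)) 2 P := by
    refine (hb.const_smul (L * √2)).mono ?_ (ae_of_all _ fun ω => ?_)
    · have hxm : AEStronglyMeasurable x P := hx2.1
      have h1 := hgc.comp_aestronglyMeasurable (hxm.add (hb.1.const_smul √2))
      exact h1.sub (hgc.comp_aestronglyMeasurable hxm)
    · refine (grad_lip hm hf hHess _ _).trans ?_
      have hL : 0 ≤ L := by linarith
      simp only [Pi.smul_apply]
      rw [add_sub_cancel_left, norm_smul, norm_smul, Real.norm_of_nonneg (Real.sqrt_nonneg _),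
        Real.norm_of_nonneg (by positivity), mul_assoc]
  have hintg := inner_integrable hA2 hdm
  refine ⟨hintg, ?_⟩
  have hfr := freeze hB (p := fun ω => (A ω, x ω)) (hA.measurable.prodMk hx.measurable) ht hs
    (Φ := fun q => inner ℝ q.1.1 (gradient f (q.1.2 + √2 • q.2) - gradient f q.1.2))
    (by
      have : Continuous fun q : (Euc d × Euc d) × Euc d =>
        inner ℝ q.1.1 (gradient f (q.1.2 + √2 • q.2) - gradient f q.1.2) := by fun_prop
      exact this.measurable) hintg
  simp only at hfr
  rw [hfr, ← integral_neg]
  have hσ : (0:ℝ) ≤ √2 * √s := by positivity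
  have hσ2 : (√2 * √s) ^ 2 = 2 * s := by
    rw [mul_pow, Real.sq_sqrt (by norm_num), Real.sq_sqrt hs]
  have hpt : ∀ ω, - (∫ z, inner ℝ (A ω) (gradient f (x ω + √2 • (√s • z)) - gradient f (x ω))
      ∂(_root_.stdGaussian d)) ≤
      c * ‖A ω‖ ^ 2 + h ^ 2 * G ^ 2 / (4 * c) * (3 * (4 + ‖x ω‖ ^ 2 + 2 * d * h)) := by
    intro ω
    have h1 := heat_grad hm hmL hf hHess hgrad0 hG hlapl (x ω) (A ω) hσ
    rw [hσ2] at h1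
    simp only [smul_smul]
    refine (neg_le_abs _).trans (h1.trans ?_)
    set u := 2 + ‖x ω‖ + √2 * √s * √d with hu
    have hu0 : 0 ≤ u := by positivity
    have hu2 : u ^ 2 ≤ 3 * (4 + ‖x ω‖ ^ 2 + 2 * d * h) := by
      have hw : (√2 * √s * √d) ^ 2 = 2 * s * d := by
        rw [mul_pow, hσ2, Real.sq_sqrt (by positivity)]
      have hd : (s * d : ℝ) ≤ h * d := by gcongr
      have : u ^ 2 ≤ 3 * (2 ^ 2 + ‖x ω‖ ^ 2 + (√2 * √s * √d) ^ 2) := by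
        rw [hu]
        nlinarith [sq_nonneg (2 - ‖x ω‖), sq_nonneg (2 - √2 * √s * √d), sq_nonneg (‖x ω‖ - √2 * √s * √d)]
      rw [hw] at this
      linarith
    have h2 : ‖A ω‖ * (G * u * (2 * s / 2)) ≤ ‖A ω‖ * (h * G * u) := by
      have : G * u * (2 * s / 2) ≤ h * G * u := by
        have : 0 ≤ G * u := by positivity
        nlinarith
      gcongr
    refine h2.trans ?_
    have h3 : ‖A ω‖ * (h * G * u) ≤ c * ‖A ω‖ ^ 2 + h ^ 2 * G ^ 2 / (4 * c) * u ^ 2 := by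
      have : c * ‖A ω‖ ^ 2 + h ^ 2 * G ^ 2 / (4 * c) * u ^ 2 - ‖A ω‖ * (h * G * u) =
        (2 * c * ‖A ω‖ - h * G * u) ^ 2 / (4 * c) := by field_simp; ring
      have h4 : 0 ≤ (2 * c * ‖A ω‖ - h * G * u) ^ 2 / (4 * c) := by positivity
      linarith
    refine h3.trans ?_
    gcongr
  have hRi : Integrable (fun ω => c * ‖A ω‖ ^ 2 +
      h ^ 2 * G ^ 2 / (4 * c) * (3 * (4 + ‖x ω‖ ^ 2 + 2 * d * h))) P :=
    ((sq_int hA2).const_mul _).add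
      (((((integrable_const 4).add (sq_int hx2)).add (integrable_const _)).const_mul _).const_mul _)
  have hRe : ∫ ω, (c * ‖A ω‖ ^ 2 +
      h ^ 2 * G ^ 2 / (4 * c) * (3 * (4 + ‖x ω‖ ^ 2 + 2 * d * h))) ∂P =
      c * ∫ ω, ‖A ω‖ ^ 2 ∂P + h ^ 2 * G ^ 2 / (4 * c) * (3 * (4 + ∫ ω, ‖x ω‖ ^ 2 ∂P + 2 * d * h)) := by
    have e1 : ∀ ω, c * ‖A ω‖ ^ 2 + h ^ 2 * G ^ 2 / (4 * c) * (3 * (4 + ‖x ω‖ ^ 2 + 2 * d * h)) =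
      c * ‖A ω‖ ^ 2 + h ^ 2 * G ^ 2 / (4 * c) * 3 * ‖x ω‖ ^ 2 +
        h ^ 2 * G ^ 2 / (4 * c) * (3 * (4 + 2 * d * h)) := fun ω => by ring
    simp only [e1]
    have i1 : Integrable (fun ω => c * ‖A ω‖ ^ 2) P := (sq_int hA2).const_mul _
    have i2 : Integrable (fun ω => h ^ 2 * G ^ 2 / (4 * c) * 3 * ‖x ω‖ ^ 2) P := (sq_int hx2).const_mul _
    have h5 := integral_add (i1.add i2) (integrable_const (μ := P) (h ^ 2 * G ^ 2 / (4 * c) * (3 * (4 + 2 * d * h))))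
    simp only [Pi.add_apply] at h5
    rw [h5, integral_add i1 i2, integral_const_mul, integral_const_mul]
    simp
    ring
  rw [← hRe]
  by_cases hI : Integrable (fun ω => - ∫ z, inner ℝ (A ω) (gradient f (x ω + √2 • (√s • z)) - gradient f (x ω))
      ∂(_root_.stdGaussian d)) P
  · exact integral_mono hI hRi hpt
  · rw [integral_undef hI]
    have hh : 0 ≤ h := hs.trans hsh
    exact integral_nonneg fun ω => by positivity
end onestep


section onestep
variable {d : ℕ} {Ω : Type*} {mΩ : MeasurableSpace Ω} {P : Measure Ω} [IsProbabilityMeasure P]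
    {ℱ : Filtration ℝ mΩ} {B X : ℝ → Ω → Euc d}
variable {f : Euc d → ℝ} {m L G : ℝ}

lemma one_step (hm : 0 < m) (hmL : m ≤ L) (hf : ContDiff ℝ 3 f) (hHess : HessianBounds m L f)
    (hgrad0 : gradient f 0 = 0) (hG : 0 < G)
    (hlapl : ∀ x : Euc d, ‖gradient (lapl f) x‖ ≤ G * (1 + ‖x‖))
    (hB : IsStdBrownian P ℱ B) (hX : IsLangevinSolution ℱ f B X)
    {t h : ℝ} (ht : 0 ≤ t) (hh : 0 < h) (hX2 : MemLp (X t) 2 P) :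
    ∃ R : Ω → Euc d,
      (∀ ω, X (t + h) ω = X t ω - h • gradient f (X t ω) + √2 • (B (t + h) ω - B t ω) + R ω) ∧
      MemLp R 2 P ∧
      ∫ ω, ‖R ω‖ ^ 2 ∂P ≤ 2 * (L ^ 2 * h) ^ 2 * (h ^ 2 * (∫ ω, ‖X t ω‖ ^ 2 ∂P + 2 * d * h))
        + 4 * L ^ 2 * (h ^ 2 * (d * h)) ∧
      ∀ a, 0 < a → ∀ A : Ω → Euc d, StronglyMeasurable[ℱ t] A → MemLp A 2 P →
        2 * ∫ ω, inner ℝ (A ω) (R ω) ∂P ≤ a * ∫ ω, ‖A ω‖ ^ 2 ∂P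
          + 2 / a * (L ^ 2 * h) ^ 2 * (h ^ 2 * (∫ ω, ‖X t ω‖ ^ 2 ∂P + 2 * d * h))
          + 2 / a * h ^ 4 * G ^ 2 * (3 * (4 + ∫ ω, ‖X t ω‖ ^ 2 ∂P + 2 * d * h)) := by
  have hL : 0 ≤ L := by linarith
  have hgc : Continuous (gradient f) := (gradient_contDiff hf).continuous
  have hxs : StronglyMeasurable[ℱ t] (X t) := hX.adapted t
  have hXm : ∀ s, Measurable (X s) := fun s => ((hX.adapted s).mono (ℱ.le s)).measurable
  have hBm := hB.meas
  have hcX := hX.cont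
  have hcB := hB.cont
  have hpath := fun ω => path_local hL (grad_mono hm hf hHess hmL) (grad_lip hm hf hHess) hgrad0
    (hX.cont ω) (hB.cont ω) (hX.eqn ω) ht hh.le
  -- processes
  have hbM : Measurable (Function.uncurry fun s ω => B (t + s) ω - B t ω) :=
    joint_meas (fun ω => ((hcB ω).comp (by fun_prop : Continuous fun s : ℝ => t + s)).sub continuous_const)
      fun s => (hBm _).sub (hBm _)
  have hyM : Measurable (Function.uncurry fun s ω => X t ω + √2 • (B (t + s) ω - B t ω)) :=
    joint_meas (fun ω => continuous_const.add
        ((((hcB ω).comp (by fun_prop : Continuous fun s : ℝ => t + s)).sub continuous_const).const_smul √2))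
      fun s => (hXm _).add (((hBm _).sub (hBm _)).const_smul √2)
  have hXM : Measurable (Function.uncurry fun s ω => X (t + s) ω) :=
    joint_meas (fun ω => (hcX ω).comp (by fun_prop : Continuous fun s : ℝ => t + s)) fun s => hXm _
  have hby : ∀ ω, Continuous fun s => X t ω + √2 • (B (t + s) ω - B t ω) := fun ω =>
    continuous_const.add
        ((((hcB ω).comp (by fun_prop : Continuous fun s : ℝ => t + s)).sub continuous_const).const_smul √2)
  have hbc : ∀ ω, Continuous fun s => B (t + s) ω - B t ω := fun ω =>
    ((hcB ω).comp (by fun_prop : Continuous fun s : ℝ => t + s)).sub continuous_const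
  -- jensen
  set M := ∫ ω, ‖X t ω‖ ^ 2 ∂P + 2 * d * h with hM
  obtain ⟨hJm, hJi, hJ⟩ := jensen (P := P) (F := fun s ω => ‖X t ω + √2 • (B (t + s) ω - B t ω)‖)
    hyM.norm (fun ω => (hby ω).norm) (h := h) (c := M) hh
    (fun s hs hsh => sq_int (add_incr_sq hB ht hs hxs hX2).1)
    (fun s hs hsh => by
      rw [(add_incr_sq hB ht hs hxs hX2).2, hM]
      gcongr)
  obtain ⟨hKm, hKi, hK⟩ := jensen (P := P) (F := fun s ω => ‖B (t + s) ω - B t ω‖)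
    hbM.norm (fun ω => (hbc ω).norm) (h := h) (c := d * h) hh
    (fun s hs hsh => sq_int (incr_memLp hB ht hs).1)
    (fun s hs hsh => by
      rw [(incr_memLp hB ht hs).2]
      gcongr)
  have hbj := joint_int (P := P) (F := fun s ω => ‖B (t + s) ω - B t ω‖) hbM.norm (h := h) (c := d * h)
    (fun s hs hsh => sq_int (incr_memLp hB ht hs).1)
    (fun s hs hsh => by
      rw [(incr_memLp hB ht hs).2]
      gcongr)
  set J : Ω → ℝ := fun ω => ∫ s in (0:ℝ)..h, ‖X t ω + √2 • (B (t + s) ω - B t ω)‖ with hJdef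
  set K : Ω → ℝ := fun ω => ∫ s in (0:ℝ)..h, ‖B (t + s) ω - B t ω‖ with hKdef
  let I1 : Ω → Euc d := fun ω => ∫ r in (0:ℝ)..h, (gradient f (X (t + r) ω) -
    gradient f (X t ω + √2 • (B (t + r) ω - B t ω)))
  let I2 : Ω → Euc d := fun ω => ∫ r in (0:ℝ)..h, (gradient f (X t ω + √2 • (B (t + r) ω - B t ω)) -
    gradient f (X t ω))
  have hJ0 : ∀ ω, 0 ≤ J ω := fun ω => intervalIntegral.integral_nonneg hh.le fun _ _ => norm_nonneg _
  have hK0 : ∀ ω, 0 ≤ K ω := fun ω => intervalIntegral.integral_nonneg hh.le fun _ _ => norm_nonneg _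
  have hI1b : ∀ ω, ‖I1 ω‖ ≤ L ^ 2 * h * J ω := fun ω => (hpath ω).2.2.1
  have hI2b : ∀ ω, ‖I2 ω‖ ≤ L * √2 * K ω := fun ω => (hpath ω).2.2.2
  have hXtM : Measurable fun q : ℝ × Ω => X t q.2 := (hXm t).comp measurable_snd
  have hD2M : Measurable (Function.uncurry fun r ω => gradient f (X t ω + √2 • (B (t + r) ω - B t ω)) -
    gradient f (X t ω)) := (hgc.measurable.comp hyM).sub (hgc.measurable.comp hXtM)
  have hD1M : Measurable (Function.uncurry fun r ω => gradient f (X (t + r) ω) -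
    gradient f (X t ω + √2 • (B (t + r) ω - B t ω))) :=
      (hgc.measurable.comp hXM).sub (hgc.measurable.comp hyM)
  have hI1m : Measurable I1 := by
    simp only [I1, intervalIntegral.integral_of_le hh.le]
    exact (hD1M.stronglyMeasurable.integral_prod_left (μ := volume.restrict (Set.Ioc 0 h))).measurable
  have hI2m : Measurable I2 := by
    simp only [I2, intervalIntegral.integral_of_le hh.le]
    exact (hD2M.stronglyMeasurable.integral_prod_left (μ := volume.restrict (Set.Ioc 0 h))).measurable
  have hI1L : MemLp I1 2 P := by
    rw [memLp_two_iff_integrable_sq_norm hI1m.aestronglyMeasurable]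
    refine (hJi.const_mul ((L ^ 2 * h) ^ 2)).mono' (hI1m.norm.pow_const 2).aestronglyMeasurable
      (ae_of_all _ fun ω => ?_)
    rw [Real.norm_of_nonneg (by positivity), ← mul_pow]
    exact pow_le_pow_left₀ (norm_nonneg _) (hI1b ω) 2
  have hI2L : MemLp I2 2 P := by
    rw [memLp_two_iff_integrable_sq_norm hI2m.aestronglyMeasurable]
    refine (hKi.const_mul ((L * √2) ^ 2)).mono' (hI2m.norm.pow_const 2).aestronglyMeasurable
      (ae_of_all _ fun ω => ?_)
    rw [Real.norm_of_nonneg (by positivity), ← mul_pow]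
    exact pow_le_pow_left₀ (norm_nonneg _) (hI2b ω) 2
  have hRL : MemLp (fun ω => - I1 ω - I2 ω) 2 P := hI1L.neg.sub hI2L
  refine ⟨fun ω => - I1 ω - I2 ω, fun ω => ?_, hRL, ?_, ?_⟩
  · rw [(hpath ω).2.1]
    simp only [I1, I2]
    abel
  · have hpt : ∀ ω, ‖- I1 ω - I2 ω‖ ^ 2 ≤ 2 * (L ^ 2 * h) ^ 2 * J ω ^ 2 + 4 * L ^ 2 * K ω ^ 2 := by
      intro ω
      have h1 : ‖- I1 ω - I2 ω‖ ≤ L ^ 2 * h * J ω + L * √2 * K ω := by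
        refine (norm_sub_le _ _).trans ?_
        rw [norm_neg]
        exact add_le_add (hI1b ω) (hI2b ω)
      have h2 := pow_le_pow_left₀ (norm_nonneg _) h1 2
      have h3 : (L * √2 * K ω) ^ 2 = 2 * L ^ 2 * K ω ^ 2 := by
        rw [mul_pow, mul_pow, Real.sq_sqrt (by norm_num)]; ring
      nlinarith [sq_nonneg (L ^ 2 * h * J ω - L * √2 * K ω)]
    have i1 : Integrable (fun ω => 2 * (L ^ 2 * h) ^ 2 * J ω ^ 2) P := hJi.const_mul _
    have i2 : Integrable (fun ω => 4 * L ^ 2 * K ω ^ 2) P := hKi.const_mul _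
    refine (integral_mono (sq_int hRL) (i1.add i2) hpt).trans ?_
    have := integral_add i1 i2
    simp only [Pi.add_apply]
    rw [this, integral_const_mul, integral_const_mul]
    gcongr
  · intro a ha A hA hA2
    have hi1 := inner_integrable hA2 hI1L
    have hi2 := inner_integrable hA2 hI2L
    have e0 : ∫ ω, inner ℝ (A ω) (- I1 ω - I2 ω) ∂P =
        - ∫ ω, inner ℝ (A ω) (I1 ω) ∂P - ∫ ω, inner ℝ (A ω) (I2 ω) ∂P := by
      simp only [inner_sub_right, inner_neg_right]
      have h1 := integral_sub hi1.neg hi2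
      simp only [Pi.neg_apply] at h1
      rw [h1, integral_neg]
    -- first part
    have b1 : - (2 * ∫ ω, inner ℝ (A ω) (I1 ω) ∂P) ≤ a / 2 * ∫ ω, ‖A ω‖ ^ 2 ∂P +
        2 / a * (L ^ 2 * h) ^ 2 * (h ^ 2 * M) := by
      have hpt : ∀ ω, - (2 * inner ℝ (A ω) (I1 ω)) ≤ a / 2 * ‖A ω‖ ^ 2 + 2 / a * (L ^ 2 * h) ^ 2 * J ω ^ 2 := by
        intro ω
        have h1 := (abs_le.1 (abs_real_inner_le_norm (A ω) (I1 ω))).1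
        have h2 : ‖A ω‖ * ‖I1 ω‖ ≤ ‖A ω‖ * (L ^ 2 * h * J ω) := by gcongr; exact hI1b ω
        have h3 : a / 2 * ‖A ω‖ ^ 2 + 2 / a * (L ^ 2 * h) ^ 2 * J ω ^ 2 - 2 * (‖A ω‖ * (L ^ 2 * h * J ω)) =
          (a * ‖A ω‖ - 2 * (L ^ 2 * h * J ω)) ^ 2 / (2 * a) := by field_simp; ring
        have h4 : 0 ≤ (a * ‖A ω‖ - 2 * (L ^ 2 * h * J ω)) ^ 2 / (2 * a) := by positivity
        linarith
      have i1 : Integrable (fun ω => a / 2 * ‖A ω‖ ^ 2) P := (sq_int hA2).const_mul _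
      have i2 : Integrable (fun ω => 2 / a * (L ^ 2 * h) ^ 2 * J ω ^ 2) P := hJi.const_mul _
      have h5 := integral_mono (hi1.const_mul 2).neg (i1.add i2) hpt
      simp only [Pi.add_apply, Pi.neg_apply] at h5
      rw [integral_add i1 i2, integral_neg, integral_const_mul, integral_const_mul, integral_const_mul] at h5
      refine h5.trans ?_
      gcongr
    -- second part
    have hjA : Integrable (fun q : ℝ × Ω => ‖A q.2‖ ^ 2) ((volume.restrict (Set.Ioc 0 h)).prod P) :=
      (sq_int hA2).comp_snd _
    have hAm : Measurable A := (hA.mono (ℱ.le t)).measurable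
    have hjoint : Integrable (Function.uncurry fun r ω => inner ℝ (A ω)
        (gradient f (X t ω + √2 • (B (t + r) ω - B t ω)) - gradient f (X t ω)))
        ((volume.restrict (Set.Ioc 0 h)).prod P) := by
      refine ((hjA.add hbj).const_mul (L * √2)).mono' ?_ (ae_of_all _ fun q => ?_)
      · exact ((hAm.comp measurable_snd).inner hD2M).aestronglyMeasurable
      · simp only [Function.uncurry, Pi.add_apply]
        have h1 := norm_inner_le_norm (𝕜 := ℝ) (A q.2)
          (gradient f (X t q.2 + √2 • (B (t + q.1) q.2 - B t q.2)) - gradient f (X t q.2))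
        have h2 := grad_lip hm hf hHess (X t q.2 + √2 • (B (t + q.1) q.2 - B t q.2)) (X t q.2)
        rw [add_sub_cancel_left, norm_smul, Real.norm_of_nonneg (Real.sqrt_nonneg _), ← mul_assoc] at h2
        refine h1.trans ((mul_le_mul_of_nonneg_left h2 (norm_nonneg _)).trans ?_)
        have h3 : ‖A q.2‖ * (L * √2 * ‖B (t + q.1) q.2 - B t q.2‖) =
          L * √2 * (‖A q.2‖ * ‖B (t + q.1) q.2 - B t q.2‖) := by ring
        rw [h3]
        gcongr
        nlinarith [sq_nonneg (‖A q.2‖ - ‖B (t + q.1) q.2 - B t q.2‖),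
          norm_nonneg (A q.2), norm_nonneg (B (t + q.1) q.2 - B t q.2)]
    have e2 : ∫ ω, inner ℝ (A ω) (I2 ω) ∂P = ∫ r in Set.Ioc 0 h, ∫ ω, inner ℝ (A ω)
        (gradient f (X t ω + √2 • (B (t + r) ω - B t ω)) - gradient f (X t ω)) ∂P := by
      rw [integral_integral_swap hjoint]
      refine integral_congr_ae (ae_of_all _ fun ω => ?_)
      simp only [I2, intervalIntegral.integral_of_le hh.le]
      have hci : Continuous fun r => gradient f (X t ω + √2 • (B (t + r) ω - B t ω)) - gradient f (X t ω) :=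
        (hgc.comp (hby ω)).sub continuous_const
      exact (integral_inner (𝕜 := ℝ) (hci.integrableOn_Ioc) (A ω)).symm
    have b2 : - (∫ ω, inner ℝ (A ω) (I2 ω) ∂P) ≤ h * (a / (4 * h) * ∫ ω, ‖A ω‖ ^ 2 ∂P +
        h ^ 2 * G ^ 2 / (4 * (a / (4 * h))) * (3 * (4 + ∫ ω, ‖X t ω‖ ^ 2 ∂P + 2 * d * h))) := by
      rw [e2, ← integral_neg]
      have h5 : ∫ r in Set.Ioc 0 h, - ∫ ω, inner ℝ (A ω)
        (gradient f (X t ω + √2 • (B (t + r) ω - B t ω)) - gradient f (X t ω)) ∂P ≤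
          ∫ r in Set.Ioc 0 h, (a / (4 * h) * ∫ ω, ‖A ω‖ ^ 2 ∂P +
        h ^ 2 * G ^ 2 / (4 * (a / (4 * h))) * (3 * (4 + ∫ ω, ‖X t ω‖ ^ 2 ∂P + 2 * d * h))) :=
        setIntegral_mono_on hjoint.integral_prod_left.neg (integrable_const _) measurableSet_Ioc
          fun r hr => (weak_pt hm hmL hf hHess hgrad0 hG hlapl hB ht hr.1.le hr.2 hA hA2 hxs hX2
            (by positivity)).2
      refine h5.trans (le_of_eq ?_)
      rw [integral_const]
      simp [hh.le]
    have e3 : h * (a / (4 * h) * ∫ ω, ‖A ω‖ ^ 2 ∂P +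
        h ^ 2 * G ^ 2 / (4 * (a / (4 * h))) * (3 * (4 + ∫ ω, ‖X t ω‖ ^ 2 ∂P + 2 * d * h))) =
        a / 4 * ∫ ω, ‖A ω‖ ^ 2 ∂P + 1 / a * h ^ 4 * G ^ 2 * (3 * (4 + ∫ ω, ‖X t ω‖ ^ 2 ∂P + 2 * d * h)) := by
      field_simp
    rw [e3] at b2
    rw [e0]
    have e4 : 2 / a * h ^ 4 * G ^ 2 * (3 * (4 + ∫ ω, ‖X t ω‖ ^ 2 ∂P + 2 * d * h)) =
      2 * (1 / a * h ^ 4 * G ^ 2 * (3 * (4 + ∫ ω, ‖X t ω‖ ^ 2 ∂P + 2 * d * h))) := by ring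
    rw [e4]
    linarith
end onestep


section final
variable {d : ℕ} {Ω : Type*} {mΩ : MeasurableSpace Ω} {P : Measure Ω} [IsProbabilityMeasure P]
    {ℱ : Filtration ℝ mΩ} {B X : ℝ → Ω → Euc d}
variable {f : Euc d → ℝ} {m L G : ℝ}

lemma sq_expand {U V : Ω → Euc d} (hU : MemLp U 2 P) (hV : MemLp V 2 P) :
    ∫ ω, ‖U ω + V ω‖ ^ 2 ∂P =
      ∫ ω, ‖U ω‖ ^ 2 ∂P + 2 * ∫ ω, inner ℝ (U ω) (V ω) ∂P + ∫ ω, ‖V ω‖ ^ 2 ∂P := by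
  simp only [norm_add_sq_real]
  have h3 : Integrable (fun ω => 2 * inner ℝ (U ω) (V ω)) P := (inner_integrable hU hV).const_mul _
  have h5 := integral_add ((sq_int hU).add h3) (sq_int hV)
  simp only [Pi.add_apply] at h5
  rw [h5, integral_add (sq_int hU) h3, integral_const_mul]

lemma sq_young {U V : Ω → Euc d} (hU : MemLp U 2 P) (hV : MemLp V 2 P) {c : ℝ} (hc : 0 < c) :
    ∫ ω, ‖U ω + V ω‖ ^ 2 ∂P ≤ (1 + c) * ∫ ω, ‖U ω‖ ^ 2 ∂P + (1 + 1 / c) * ∫ ω, ‖V ω‖ ^ 2 ∂P := by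
  rw [sq_expand hU hV]
  have h1 : 2 * ∫ ω, inner ℝ (U ω) (V ω) ∂P ≤ c * ∫ ω, ‖U ω‖ ^ 2 ∂P + 1 / c * ∫ ω, ‖V ω‖ ^ 2 ∂P := by
    rw [← integral_const_mul, ← integral_const_mul, ← integral_const_mul,
      ← integral_add ((sq_int hU).const_mul _) ((sq_int hV).const_mul _)]
    refine integral_mono ((inner_integrable hU hV).const_mul _)
      (((sq_int hU).const_mul _).add ((sq_int hV).const_mul _)) fun ω => ?_
    simp only
    have h1 := real_inner_le_norm (U ω) (V ω)
    have h3 : c * ‖U ω‖ ^ 2 + 1 / c * ‖V ω‖ ^ 2 - 2 * (‖U ω‖ * ‖V ω‖) = (c * ‖U ω‖ - ‖V ω‖) ^ 2 / c := by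
      field_simp; ring
    have h4 : 0 ≤ (c * ‖U ω‖ - ‖V ω‖) ^ 2 / c := by positivity
    linarith
  linarith

/-- the arithmetic of the remainder -/
lemma arith_R {D T h M : ℝ} (hm : 0 < m) (hh : 0 < h) (hL2 : 4 * (L ^ 2 * h) ≤ m)
    (hT : 0 ≤ T) (ha : m * h ≤ 1 / 4) (hD : 0 ≤ D) (hDT : 2 * D ≤ m * T) (hM : M ≤ 2 * T) :
    2 * (L ^ 2 * h) ^ 2 * (h ^ 2 * (M + 2 * D * h)) + 4 * L ^ 2 * (h ^ 2 * (D * h)) ≤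
      25 / 32 * (m * h) ^ 2 * T := by
  have hDh : 2 * D * h ≤ m * h * T := by nlinarith
  have h1 : M + 2 * D * h ≤ 9 / 4 * T := by nlinarith
  have hq : 0 ≤ L ^ 2 * h := by positivity
  have h2 : (L ^ 2 * h) ^ 2 ≤ m ^ 2 / 16 := by nlinarith
  have h3 : 2 * (L ^ 2 * h) ^ 2 * (h ^ 2 * (M + 2 * D * h)) ≤ 2 * (m ^ 2 / 16) * (h ^ 2 * (9 / 4 * T)) := by
    calc 2 * (L ^ 2 * h) ^ 2 * (h ^ 2 * (M + 2 * D * h))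
        ≤ 2 * (L ^ 2 * h) ^ 2 * (h ^ 2 * (9 / 4 * T)) := by gcongr
      _ ≤ _ := by gcongr
  have h4 : 4 * L ^ 2 * (h ^ 2 * (D * h)) ≤ m * h * (m * h * T / 2) := by
    have : 4 * L ^ 2 * (h ^ 2 * (D * h)) = 4 * (L ^ 2 * h) * h * (D * h) := by ring
    rw [this]
    gcongr
    linarith
  nlinarith

lemma arith_err {D T h M e E Z : ℝ} (hm : 0 < m) (hmL : m ≤ L) (hG : 0 < G) (hh : 0 < h)
    (hT : 0 ≤ T) (ha : m * h ≤ 1 / 4) (hD : 0 ≤ D) (hDT : 2 * D ≤ m * T) (hM : M ≤ 2 * T) 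
    (hE : E = 100 * (L ^ 2 + G) ^ 2 * (T + 1) * h ^ 2 / m ^ 2) (he : e ≤ E)
    (hZ : Z ≤ (1 - m * h) ^ 2 * e) :
    Z + (m * h * Z + 2 / (m * h) * (L ^ 2 * h) ^ 2 * (h ^ 2 * (M + 2 * D * h))
          + 2 / (m * h) * h ^ 4 * G ^ 2 * (3 * (4 + M + 2 * D * h)))
      + (2 * (L ^ 2 * h) ^ 2 * (h ^ 2 * (M + 2 * D * h)) + 4 * L ^ 2 * (h ^ 2 * (D * h))) ≤ E := by
  have hDh : 2 * D * h ≤ m * h * T := by nlinarith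
  have h1 : M + 2 * D * h ≤ 9 / 4 * T := by nlinarith
  set a := m * h with hadef
  have ha0 : 0 < a := by positivity
  have hLp : 0 < L := by linarith
  set H := h ^ 2 / m ^ 2 with hH
  have hH0 : 0 < H := by positivity
  set Q := L ^ 2 + G with hQ
  have hQ1 : L ^ 2 ≤ Q := by linarith
  have hQ2 : L ^ 4 + G ^ 2 ≤ Q ^ 2 := by
    have : 0 ≤ L ^ 2 * G := by positivity
    rw [hQ]; nlinarith
  have hE' : E = 100 * (Q ^ 2 * (T + 1) * H) := by rw [hE, hH]; ring
  set W := Q ^ 2 * (T + 1) * H with hW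
  have hW0 : 0 ≤ W := by positivity
  have t1 : 2 / a * (L ^ 2 * h) ^ 2 * (h ^ 2 * (M + 2 * D * h)) ≤ a * (9 / 2 * (L ^ 4 * (T + 1) * H)) := by
    calc 2 / a * (L ^ 2 * h) ^ 2 * (h ^ 2 * (M + 2 * D * h))
        ≤ 2 / a * (L ^ 2 * h) ^ 2 * (h ^ 2 * (9 / 4 * (T + 1))) := by gcongr; linarith
      _ = a * (9 / 2 * (L ^ 4 * (T + 1) * H)) := by
        rw [hH, hadef]; field_simp; ring
  have t2 : 2 / a * h ^ 4 * G ^ 2 * (3 * (4 + M + 2 * D * h)) ≤ a * (24 * (G ^ 2 * (T + 1) * H)) := by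
    calc 2 / a * h ^ 4 * G ^ 2 * (3 * (4 + M + 2 * D * h))
        ≤ 2 / a * h ^ 4 * G ^ 2 * (3 * (4 * (T + 1))) := by gcongr; linarith
      _ = a * (24 * (G ^ 2 * (T + 1) * H)) := by
        rw [hH, hadef]; field_simp; ring
  have t3 : 2 * (L ^ 2 * h) ^ 2 * (h ^ 2 * (M + 2 * D * h)) ≤ a * (9 / 8 * (L ^ 4 * (T + 1) * H)) := by
    calc 2 * (L ^ 2 * h) ^ 2 * (h ^ 2 * (M + 2 * D * h))
        ≤ 2 * (L ^ 2 * h) ^ 2 * (h ^ 2 * (9 / 4 * (T + 1))) := by gcongr; linarith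
      _ = a * a * (9 / 2 * (L ^ 4 * (T + 1) * H)) := by
        rw [hH, hadef]; field_simp; ring
      _ ≤ a * (1 / 4) * (9 / 2 * (L ^ 4 * (T + 1) * H)) := by gcongr
      _ = _ := by ring
  have t4 : 4 * L ^ 2 * (h ^ 2 * (D * h)) ≤ a * (2 * (L ^ 4 * (T + 1) * H)) := by
    calc 4 * L ^ 2 * (h ^ 2 * (D * h)) ≤ 4 * L ^ 2 * (h ^ 2 * (a * (T + 1) / 2)) := by
          gcongr; nlinarith
      _ = a * (2 * (L ^ 2 * m ^ 2 * (T + 1) * H)) := by rw [hH]; field_simp; ring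
      _ ≤ a * (2 * (L ^ 2 * L ^ 2 * (T + 1) * H)) := by gcongr
      _ = _ := by ring
  have hs : L ^ 4 * (T + 1) * H + G ^ 2 * (T + 1) * H ≤ W := by
    rw [hW, ← add_mul, ← add_mul]; gcongr
  have p1 : 0 ≤ L ^ 4 * (T + 1) * H := by positivity
  have p2 : 0 ≤ G ^ 2 * (T + 1) * H := by positivity
  have tot : a * (9 / 2 * (L ^ 4 * (T + 1) * H)) + a * (24 * (G ^ 2 * (T + 1) * H)) +
      a * (9 / 8 * (L ^ 4 * (T + 1) * H)) + a * (2 * (L ^ 4 * (T + 1) * H)) ≤ a * (100 * W) := by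
    have : (9 / 2 * (L ^ 4 * (T + 1) * H)) + (24 * (G ^ 2 * (T + 1) * H)) +
      (9 / 8 * (L ^ 4 * (T + 1) * H)) + (2 * (L ^ 4 * (T + 1) * H)) ≤ 100 * W := by linarith
    have := mul_le_mul_of_nonneg_left this ha0.le
    linarith
  have z1 : (1 + a) * Z ≤ (1 - a) * E := by
    have h5 : (1 - a) ^ 2 * e ≤ (1 - a) ^ 2 * E := by gcongr
    have h6 : (1 + a) * Z ≤ (1 + a) * ((1 - a) ^ 2 * E) := by gcongr; linarith
    have hE0 : 0 ≤ E := by rw [hE']; positivity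
    have h7 : (1 + a) * ((1 - a) ^ 2 * E) ≤ (1 - a) * E := by
      have : 0 ≤ (1 - a) * a ^ 2 * E := by
        have : 0 ≤ 1 - a := by linarith
        positivity
      have h8 : (1 + a) * ((1 - a) ^ 2 * E) = (1 - a) * E - (1 - a) * a ^ 2 * E := by ring
      linarith
    linarith
  rw [← hE'] at tot
  linarith

lemma arith_mom {T h V S M D: ℝ} (hm : 0 < m) (hh : 0 < h)
    (hT : 0 ≤ T) (ha : m * h ≤ 1 / 4) (hDT : 2 * D ≤ m * T) (hM : M ≤ 2 * T)
    (hV : V ≤ (1 - m * h) ^ 2 * M + 2 * D * h)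
    (hS : S ≤ 25 / 32 * (m * h) ^ 2 * T) :
    (1 + m * h / 2) * V + (1 + 1 / (m * h / 2)) * S ≤ 2 * T := by
  have hDh : 2 * D * h ≤ m * h * T := by nlinarith
  set a := m * h with hadef
  have ha0 : 0 < a := by positivity
  have h1 : V ≤ (1 - a) ^ 2 * (2 * T) + a * T := by
    have : (1 - a) ^ 2 * M ≤ (1 - a) ^ 2 * (2 * T) := by gcongr
    linarith
  have h2 : (1 + a / 2) * V ≤ (1 + a / 2) * ((1 - a) ^ 2 * (2 * T) + a * T) := by gcongr
  have h3 : (1 + 1 / (a / 2)) * S ≤ (1 + 1 / (a / 2)) * (25 / 32 * a ^ 2 * T) := by gcongr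
  have h4 : (1 + 1 / (a / 2)) * (25 / 32 * a ^ 2 * T) = (25 / 32 * a ^ 2 + 25 / 16 * a) * T := by
    field_simp; ring
  have h5 : (1 + a / 2) * ((1 - a) ^ 2 * 2 + a) + (25 / 32 * a ^ 2 + 25 / 16 * a) ≤ 2 := by
    nlinarith [mul_nonneg ha0.le (sub_nonneg.2 ha), mul_nonneg (sq_nonneg a) (sub_nonneg.2 ha)]
  have h6 := mul_le_mul_of_nonneg_right h5 hT
  nlinarith

lemma psi_props (hm : 0 < m) (hf : ContDiff ℝ 3 f) (hHess : HessianBounds m L f)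
    {h t : ℝ} {x : Ω → Euc d} (hx : StronglyMeasurable[ℱ t] x) (hx2 : MemLp x 2 P) (hmL : m ≤ L)
    (hg0 : gradient f 0 = 0) :
    StronglyMeasurable[ℱ t] (fun ω => x ω - h • gradient f (x ω)) ∧
      MemLp (fun ω => x ω - h • gradient f (x ω)) 2 P := by
  have hgc : Continuous (gradient f) := (gradient_contDiff hf).continuous
  have hg : MemLp (fun ω => gradient f (x ω)) 2 P := by
    refine (hx2.const_smul L).mono (hgc.comp_aestronglyMeasurable hx2.1) (ae_of_all _ fun ω => ?_)
    have := grad_lip hm hf hHess (x ω) 0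
    rw [hg0, sub_zero, sub_zero] at this
    simp only [Pi.smul_apply]
    rw [norm_smul, Real.norm_of_nonneg (by linarith)]
    exact this
  exact ⟨hx.sub ((hgc.comp_stronglyMeasurable hx).const_smul h), hx2.sub (hg.const_smul h)⟩

lemma moments (hm : 0 < m) (hmL : m ≤ L) (hf : ContDiff ℝ 3 f) (hHess : HessianBounds m L f)
    (hgrad0 : gradient f 0 = 0) (hG : 0 < G)
    (hlapl : ∀ x : Euc d, ‖gradient (lapl f) x‖ ≤ G * (1 + ‖x‖))
    (hB : IsStdBrownian P ℱ B) (hX : IsLangevinSolution ℱ f B X) (hX0 : MemLp (X 0) 2 P)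
    {h T : ℝ} (hh : 0 < h) (hL2 : 4 * (L ^ 2 * h) ≤ m) (ha : m * h ≤ 1 / 4) (hhL : 2 * h * L ≤ 1)
    (hT0 : ∫ ω, ‖X 0 ω‖ ^ 2 ∂P ≤ 2 * T) (hT : 0 ≤ T) (hDT : 2 * (d : ℝ) ≤ m * T) (k : ℕ) :
    MemLp (X (k * h)) 2 P ∧ ∫ ω, ‖X (k * h) ω‖ ^ 2 ∂P ≤ 2 * T := by
  induction k with
  | zero => simpa using ⟨hX0, hT0⟩
  | succ k ih =>
    obtain ⟨ih1, ih2⟩ := ih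
    have ht : (0:ℝ) ≤ k * h := by positivity
    have e : ((k + 1 : ℕ) : ℝ) * h = k * h + h := by push_cast; ring
    rw [e]
    obtain ⟨R, hR, hRL, hR2, -⟩ := one_step hm hmL hf hHess hgrad0 hG hlapl hB hX ht hh ih1
    have hXs := hX.adapted (k * h)
    obtain ⟨hψs, hψL⟩ := psi_props (h := h) hm hf hHess hXs ih1 hmL hgrad0
    obtain ⟨hV, hV2⟩ := add_incr_sq hB ht hh.le hψs hψL
    have hXe : X (k * h + h) = fun ω => (X (k * h) ω - h • gradient f (X (k * h) ω) +
      √2 • (B (k * h + h) ω - B (k * h) ω)) + R ω := funext hR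
    have hψ : ∫ ω, ‖X (k * h) ω - h • gradient f (X (k * h) ω)‖ ^ 2 ∂P ≤
        (1 - m * h) ^ 2 * ∫ ω, ‖X (k * h) ω‖ ^ 2 ∂P := by
      rw [← integral_const_mul]
      refine integral_mono (sq_int hψL) ((sq_int ih1).const_mul _) fun ω => ?_
      have := psi_contract hm hf hHess hh hhL hmL (X (k * h) ω) 0
      rw [hgrad0, smul_zero, sub_zero, sub_zero, sub_zero] at this
      simp only
      rw [← mul_pow]
      exact pow_le_pow_left₀ (norm_nonneg _) this 2
    rw [hXe]
    refine ⟨hV.add hRL, (sq_young hV hRL (c := m * h / 2) (by positivity)).trans ?_⟩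
    refine arith_mom (D := d) hm hh hT ha hDT ih2 ?_
      (hR2.trans (arith_R hm hh hL2 hT ha (by positivity) hDT ih2))
    rw [hV2]
    linarith

lemma err_ind (hm : 0 < m) (hmL : m ≤ L) (hf : ContDiff ℝ 3 f) (hHess : HessianBounds m L f)
    (hgrad0 : gradient f 0 = 0) (hG : 0 < G)
    (hlapl : ∀ x : Euc d, ‖gradient (lapl f) x‖ ≤ G * (1 + ‖x‖))
    (hB : IsStdBrownian P ℱ B) (hX : IsLangevinSolution ℱ f B X) (hX0 : MemLp (X 0) 2 P)
    {h T : ℝ} (hh : 0 < h) (hL2 : 4 * (L ^ 2 * h) ≤ m) (ha : m * h ≤ 1 / 4) (hhL : 2 * h * L ≤ 1)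
    (hT0 : ∫ ω, ‖X 0 ω‖ ^ 2 ∂P ≤ 2 * T) (hT : 0 ≤ T) (hDT : 2 * (d : ℝ) ≤ m * T)
    {Xb : ℕ → Ω → Euc d} (hXb0 : Xb 0 = X 0)
    (hXb : ∀ k : ℕ, Xb (k + 1) = fun ω =>
      Xb k ω - h • gradient f (Xb k ω) +
        Real.sqrt 2 • (B ((k + 1 : ℕ) * h) ω - B ((k : ℕ) * h) ω)) (k : ℕ) :
    StronglyMeasurable[ℱ (k * h)] (Xb k) ∧ MemLp (Xb k) 2 P ∧
      ∫ ω, ‖X (k * h) ω - Xb k ω‖ ^ 2 ∂P ≤ 100 * (L ^ 2 + G) ^ 2 * (T + 1) * h ^ 2 / m ^ 2 := by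
  induction k with
  | zero =>
    rw [hXb0]
    have e0 : ((0 : ℕ) : ℝ) * h = 0 := by simp
    rw [e0]
    refine ⟨hX.adapted 0, hX0, ?_⟩
    simp only [sub_self, norm_zero]
    simp
    positivity
  | succ k ih =>
    obtain ⟨ihs, ihL, ihe⟩ := ih
    have ht : (0:ℝ) ≤ k * h := by positivity
    have e : ((k + 1 : ℕ) : ℝ) * h = k * h + h := by push_cast; ring
    obtain ⟨hx2, hxM⟩ := moments hm hmL hf hHess hgrad0 hG hlapl hB hX hX0 hh hL2 ha hhL hT0 hT hDT k
    rw [hXb k, e]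
    obtain ⟨R, hR, hRL, hR2, hRw⟩ := one_step hm hmL hf hHess hgrad0 hG hlapl hB hX ht hh hx2
    have hXs := hX.adapted (k * h)
    obtain ⟨hψs, hψL⟩ := psi_props (h := h) hm hf hHess hXs hx2 hmL hgrad0
    obtain ⟨hφs, hφL⟩ := psi_props (h := h) hm hf hHess ihs ihL hmL hgrad0
    have hmono : ℱ (k * h) ≤ ℱ (k * h + h) := ℱ.mono (by linarith)
    refine ⟨?_, (add_incr_sq hB ht hh.le hφs hφL).1, ?_⟩
    · exact (hφs.mono hmono).add
        (((hB.adapted (k * h + h)).sub ((hB.adapted (k * h)).mono hmono)).const_smul √2)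
    let A : Ω → Euc d := fun ω => (X (k * h) ω - h • gradient f (X (k * h) ω)) -
      (Xb k ω - h • gradient f (Xb k ω))
    have hAs : StronglyMeasurable[ℱ (k * h)] A := hψs.sub hφs
    have hAL : MemLp A 2 P := hψL.sub hφL
    have e2 : ∀ ω, X (k * h + h) ω - (Xb k ω - h • gradient f (Xb k ω) +
        √2 • (B (k * h + h) ω - B (k * h) ω)) = A ω + R ω := by
      intro ω
      rw [hR ω]
      simp only [A]
      abel
    simp only [e2]
    rw [sq_expand hAL hRL]
    have hZ : ∫ ω, ‖A ω‖ ^ 2 ∂P ≤ (1 - m * h) ^ 2 * ∫ ω, ‖X (k * h) ω - Xb k ω‖ ^ 2 ∂P := by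
      rw [← integral_const_mul]
      refine integral_mono (sq_int hAL) ((sq_int (hx2.sub ihL)).const_mul _) fun ω => ?_
      have := psi_contract hm hf hHess hh hhL hmL (X (k * h) ω) (Xb k ω)
      simp only [Pi.sub_apply]
      rw [← mul_pow]
      exact pow_le_pow_left₀ (norm_nonneg _) this 2
    have hw := hRw (m * h) (by positivity) A hAs hAL
    refine le_trans ?_ (arith_err (D := d) hm hmL hG hh hT ha (by positivity) hDT hxM rfl ihe hZ)
    exact add_le_add (add_le_add le_rfl hw) hR2
end final

/-- **Global strong integration error of LMC** (Theorem 1 instantiated to Langevin dynamics).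
Let `f ∈ C³` be `m`-strongly convex and `L`-smooth (`0 < m ≤ L`) with `∇f(0) = 0` and
`‖∇(Δf)(x)‖ ≤ G(1 + ‖x‖)` (with `G > 0`).  Let `X` solve the overdamped Langevin dynamics
with square-integrable initial value `x₀ = X_0`, and let `x̄_k` be the LMC iterates with step
size `h` driven by the same Brownian motion, `x̄₀ = x₀`,
`x̄_k = x̄_{k-1} - h ∇f(x̄_{k-1}) + √2 (B_{kh} - B_{(k-1)h})`.
Then for every `0 < h ≤ 1/(4κL)` and every `k`:
`(E‖X_{kh} - x̄_k‖²)^{1/2} ≤ C_LMC h` with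
`C_LMC = (10 (L² + G)/m^{3/2}) √(2d + m (E‖x₀‖² + 1))`. -/
theorem lmc_global_strong_error
    {d : ℕ} {Ω : Type*} {mΩ : MeasurableSpace Ω} {P : Measure Ω} [IsProbabilityMeasure P]
    {ℱ : Filtration ℝ mΩ} {f : Euc d → ℝ} {m L G : ℝ}
    (hm : 0 < m) (hmL : m ≤ L) (hf : ContDiff ℝ 3 f) (hHess : HessianBounds m L f)
    (hgrad0 : gradient f 0 = 0) (hG : 0 < G)
    (hlapl : ∀ x : Euc d, ‖gradient (lapl f) x‖ ≤ G * (1 + ‖x‖))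
    {B X : ℝ → Ω → Euc d} (hB : IsStdBrownian P ℱ B)
    (hX : IsLangevinSolution ℱ f B X) (hX0 : MemLp (X 0) 2 P)
    {h : ℝ} (hh0 : 0 < h) (hh1 : h ≤ 1 / (4 * (L / m) * L))
    {Xb : ℕ → Ω → Euc d} (hXb0 : Xb 0 = X 0)
    (hXb : ∀ k : ℕ, Xb (k + 1) = fun ω =>
      Xb k ω - h • gradient f (Xb k ω) +
        Real.sqrt 2 • (B ((k + 1 : ℕ) * h) ω - B ((k : ℕ) * h) ω))
    (k : ℕ) :
    (∫⁻ ω, (‖X ((k : ℕ) * h) ω - Xb k ω‖₊ : ℝ≥0∞) ^ 2 ∂P) ^ (1/2 : ℝ) ≤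
      ENNReal.ofReal
        (10 * (L ^ 2 + G) / m ^ ((3:ℝ)/2) *
          Real.sqrt (2 * d + m * ((∫ ω, ‖X 0 ω‖ ^ 2 ∂P) + 1)) * h) := by
  have hLp : 0 < L := by linarith
  have hL2 : 4 * (L ^ 2 * h) ≤ m := by
    have h1 : 1 / (4 * (L / m) * L) = m / (4 * L ^ 2) := by field_simp
    rw [h1, le_div_iff₀ (by positivity)] at hh1
    linarith
  have ha : m * h ≤ 1 / 4 := by
    have : m * (m * h) ≤ m * (1 / 4) := by
      have : m * m * h ≤ L * L * h := by gcongr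
      nlinarith
    exact le_of_mul_le_mul_left this hm
  have hhL : 2 * h * L ≤ 1 := by
    have : L * (2 * h * L) ≤ L * 1 := by nlinarith
    exact le_of_mul_le_mul_left this hLp
  set I0 := ∫ ω, ‖X 0 ω‖ ^ 2 ∂P with hI0
  have hI00 : 0 ≤ I0 := integral_nonneg fun ω => by positivity
  set T := I0 + 2 * d / m with hTdef
  have hd : (0:ℝ) ≤ 2 * d / m := by positivity
  have hT : 0 ≤ T := by positivity
  have hDT : 2 * (d : ℝ) ≤ m * T := by
    rw [hTdef, mul_add, mul_div_cancel₀ _ hm.ne']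
    nlinarith
  have hT0 : ∫ ω, ‖X 0 ω‖ ^ 2 ∂P ≤ 2 * T := by rw [← hI0]; linarith
  obtain ⟨-, hbL, hbe⟩ := err_ind hm hmL hf hHess hgrad0 hG hlapl hB hX hX0 hh0 hL2 ha hhL hT0 hT hDT
    hXb0 hXb k
  obtain ⟨hxL, -⟩ := moments hm hmL hf hHess hgrad0 hG hlapl hB hX hX0 hh0 hL2 ha hhL hT0 hT hDT k
  have hS : 2 * d + m * (I0 + 1) = m * (T + 1) := by
    rw [hTdef]; field_simp; ring
  rw [hS]
  set C := 10 * (L ^ 2 + G) / m ^ ((3:ℝ)/2) * √(m * (T + 1)) * h with hC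
  have hC0 : 0 ≤ C := by positivity
  have hm3 : (m ^ ((3:ℝ)/2)) ^ 2 = m ^ 3 := by
    rw [← Real.rpow_natCast, ← Real.rpow_mul hm.le, ← Real.rpow_natCast]; norm_num
  have hC2 : C ^ 2 = 100 * (L ^ 2 + G) ^ 2 * (T + 1) * h ^ 2 / m ^ 2 := by
    rw [hC, mul_pow, mul_pow, div_pow, hm3, Real.sq_sqrt (by positivity)]
    field_simp; ring
  rw [← hC2] at hbe
  have hlin : ∫⁻ ω, (‖X ((k : ℕ) * h) ω - Xb k ω‖₊ : ℝ≥0∞) ^ 2 ∂P =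
      ENNReal.ofReal (∫ ω, ‖X (k * h) ω - Xb k ω‖ ^ 2 ∂P) := by
    have hi : Integrable (fun ω => ‖X (k * h) ω - Xb k ω‖ ^ 2) P := sq_int (hxL.sub hbL)
    rw [ofReal_integral_eq_lintegral_ofReal hi (ae_of_all _ fun ω => by positivity)]
    refine lintegral_congr fun ω => ?_
    rw [ENNReal.ofReal_pow (norm_nonneg _), ofReal_norm_eq_enorm]
    rfl
  rw [hlin]
  calc (ENNReal.ofReal (∫ ω, ‖X (k * h) ω - Xb k ω‖ ^ 2 ∂P)) ^ (1/2 : ℝ)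
      ≤ (ENNReal.ofReal (C ^ 2)) ^ (1/2 : ℝ) := by gcongr
    _ = ENNReal.ofReal C := by
      rw [ENNReal.ofReal_rpow_of_nonneg (by positivity) (by norm_num), ← Real.sqrt_eq_rpow,
        Real.sqrt_sq hC0]
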